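/- Let K and L be convex bodies in R^m and t ∈ (0,1). If the surface area measure of K is dominated by that of L (S(K,·) ≤ S(L,·) as measures) and M is the convex body with S(M,·) = S(L,·) − t·S(K,·), then Vol(L)^{(m−1)/m} ≥ Vol(M)^{(m−1)/m} + t · Vol(K)^{(m−1)/m} ≥ t · Vol(K)^{(m−1)/m}. -/

import Mathlib

open MeasureTheory Set
open scoped ENNReal Pointwise RealInnerProductSpace Topology

noncomputable section

abbrev Euc (m : ℕ) : Type := EuclideanSpace ℝ (Fin m)

/-- A convex body: compact convex set with nonempty interior. -/
def IsConvexBody {m : ℕ} (K : Set (Euc m)) : Prop :=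
  Convex ℝ K ∧ IsCompact K ∧ (interior K).Nonempty

/-- A (compact convex) polytope: convex hull of a finite set. -/
def IsPolytope {m : ℕ} (P : Set (Euc m)) : Prop :=
  ∃ s : Finset (Euc m), P = convexHull ℝ (s : Set (Euc m))

def unitSphere (m : ℕ) : Set (Euc m) := Metric.sphere 0 1

/-- `n` is an outward unit normal to `K` at the boundary point `x`. -/
def IsOutwardNormalAt {m : ℕ} (K : Set (Euc m)) (x n : Euc m) : Prop :=
  x ∈ frontier K ∧ ‖n‖ = 1 ∧ ∀ y ∈ K, ⟪y - x, n⟫ ≤ 0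

open Classical in
/-- The (set-valued choice of) Gauss map of `K`. -/
def gaussMap {m : ℕ} (K : Set (Euc m)) (x : Euc m) : Euc m :=
  if h : ∃ n, IsOutwardNormalAt K x n then h.choose else 0

/-- The surface area measure of `K`: the pushforward under the Gauss map of the
`(m-1)`-dimensional Hausdorff measure on the boundary of `K`. -/
def surfMeasure {m : ℕ} (K : Set (Euc m)) : Measure (Euc m) :=
  Measure.map (gaussMap K) (μH[(m : ℝ) - 1].restrict (frontier K))

/-- The face of `P` in direction `n`. -/
def faceIn {m : ℕ} (P : Set (Euc m)) (n : Euc m) : Set (Euc m) :=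
  {x ∈ P | ∀ y ∈ P, ⟪y, n⟫ ≤ ⟪x, n⟫}

/-- The `(m-1)`-dimensional volume of the face of `P` in direction `n`. -/
def faceArea {m : ℕ} (P : Set (Euc m)) (n : Euc m) : ℝ≥0∞ :=
  μH[(m : ℝ) - 1] (faceIn P n)

/-- `n` is the outward unit normal to a facet ((m-1)-dimensional face) of `P`. -/
def IsFacetNormal {m : ℕ} (P : Set (Euc m)) (n : Euc m) : Prop :=
  ‖n‖ = 1 ∧ 0 < faceArea P n

/-!
Translate the bodies so that `0` is interior to each, and let `V₁(K, L)` be the mixed volume, so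
that `V₁(L, L) = vol L`. Two facts are combined.

* `∫ h_L dS(K, ·) = c V₁(K, L)` for the support function `h_L` and a constant `c > 0` independent of
  `K` and `L`. In polar coordinates this says that the cone over an area element `dA` of `∂K` has
  volume `h dA / m`, where `h` is the height of its tangent hyperplane. To see this, cut `∂K` into
  countably many pieces on which the normal is nearly constant. Each piece is nearly isometric to a
  piece of a hyperplane, whose cone volume is known, with distortion as close to `1` as desired.
* Minkowski's first inequality `V₁(K, L) ≥ vol(K)^((m-1)/m) vol(L)^(1/m)`, obtained by comparing
  the first order bound `vol(K + ε L) ≤ vol K + ε m V₁(K, L) + o(ε)` with the Brunn–Minkowski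
  inequality, which itself comes from the Prékopa–Leindler inequality.

Integrating `h_L` against `S(M, ·) + t S(K, ·) ≤ S(L, ·)` gives `V₁(M, L) + t V₁(K, L) ≤ vol L`. Now
bound both mixed volumes below by Minkowski's inequality and divide by `vol(L)^(1/m)`.
-/

open Module (finrank)

open scoped Gradient NNReal

section HausdorffMeasure

variable {X Y : Type*} [MetricSpace X] [MeasurableSpace X] [BorelSpace X]
  [MetricSpace Y] [MeasurableSpace Y] [BorelSpace Y] {f : X → Y} {s : Set X} {K : ℝ≥0}

theorem euclideanHausdorffMeasure_image_le (hf : LipschitzOnWith K f s) (d : ℕ) :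
    μHE[d] (f '' s) ≤ (K : ℝ≥0∞) ^ d * μHE[d] s := by
  simp only [Measure.euclideanHausdorffMeasure_def, Measure.smul_apply, mul_smul_comm]
  gcongr
  simpa only [ENNReal.rpow_natCast] using hf.hausdorffMeasure_image_le (d := d) (by positivity)

theorem le_euclideanHausdorffMeasure_image (hf : AntilipschitzWith K (s.domRestrict f)) (d : ℕ) :
    μHE[d] s ≤ (K : ℝ≥0∞) ^ d * μHE[d] (f '' s) := by
  have himage := hf.le_hausdorffMeasure_image (d := d) (by positivity) univ
  rw [image_univ, range_domRestrict, ← isometry_subtype_coe.hausdorffMeasure_image (.inl (by simp)),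
    image_univ, Subtype.range_coe, ENNReal.rpow_natCast] at himage
  simp only [Measure.euclideanHausdorffMeasure_def, Measure.smul_apply, mul_smul_comm]
  gcongr

end HausdorffMeasure

section Cone

variable {E : Type*} [NormedAddCommGroup E] [InnerProductSpace ℝ E] {u : E} {B : Set E}

theorem Ioc_smul_eq_of_subset_hyperplane (hB : B ⊆ {x | ⟪u, x⟫ = 1}) :
    Ioc (0 : ℝ) 1 • B = {y | ⟪u, y⟫ ∈ Ioc (0 : ℝ) 1 ∧ ⟪u, y⟫⁻¹ • y ∈ B} := by
  ext y
  constructor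
  · rintro ⟨s, hs, x, hx, rfl⟩
    have hus : ⟪u, s • x⟫ = s := by rw [inner_smul_right, hB hx, mul_one]
    simpa only [mem_ofPred_eq, hus, inv_smul_smul₀ hs.1.ne'] using And.intro hs hx
  · rintro ⟨hy, hyB⟩
    exact ⟨_, hy, _, hyB, smul_inv_smul₀ hy.1.ne' y⟩

theorem Ioc_smul_inter_hyperplane (hB : B ⊆ {x | ⟪u, x⟫ = 1}) {s : ℝ} (hs : s ∈ Ioc (0 : ℝ) 1) :
    Ioc (0 : ℝ) 1 • B ∩ {y | ⟪u, y⟫ = s} = s • B := by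
  ext y
  rw [Ioc_smul_eq_of_subset_hyperplane hB, mem_smul_set_iff_inv_smul_mem₀ hs.1.ne']
  constructor
  · rintro ⟨⟨-, hy⟩, rfl⟩
    exact hy
  · intro hy
    have hus : ⟪u, y⟫ = s := by
      rw [← smul_inv_smul₀ hs.1.ne' y, inner_smul_right, hB hy, mul_one]
    exact ⟨⟨hus ▸ hs, hus ▸ hy⟩, hus⟩

variable [MeasurableSpace E] [BorelSpace E]

theorem euclideanHausdorffMeasure_Ioc_smul_inter_hyperplane (hB : B ⊆ {x | ⟪u, x⟫ = 1})
    (d : ℕ) (s : ℝ) :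
    μHE[d] (Ioc (0 : ℝ) 1 • B ∩ {y | ⟪u, y⟫ = s}) =
      (Ioc (0 : ℝ) 1).indicator (fun s => ENNReal.ofReal (s ^ d) * μHE[d] B) s := by
  by_cases hs : s ∈ Ioc (0 : ℝ) 1
  · rw [indicator_of_mem hs, Ioc_smul_inter_hyperplane hB hs,
      Measure.euclideanHausdorffMeasure_smul₀ d hs.1.ne', ENNReal.smul_def, smul_eq_mul,
      ENNReal.coe_pow, ← enorm_eq_nnnorm, Real.enorm_eq_ofReal hs.1.le, ENNReal.ofReal_pow hs.1.le]
  · have hempty : Ioc (0 : ℝ) 1 • B ∩ {y | ⟪u, y⟫ = s} = ∅ := by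
      rw [Ioc_smul_eq_of_subset_hyperplane hB, eq_empty_iff_forall_notMem]
      rintro y ⟨⟨hy, -⟩, rfl⟩
      exact hs hy
    rw [indicator_of_notMem hs, hempty, measure_empty]

variable [FiniteDimensional ℝ E]

theorem volume_eq_lintegral_inter_hyperplane (hu : u ≠ 0) {A : Set E} (hA : MeasurableSet A) :
    volume A = ‖u‖ₑ⁻¹ * ∫⁻ s : ℝ, μHE[finrank ℝ E - 1] (A ∩ {y | ⟪u, y⟫ = s}) := by
  have hu' : 0 < ‖u‖ := norm_pos_iff.2 hu
  have hv : (‖u‖ ^ 2)⁻¹ • u ≠ 0 := smul_ne_zero (by positivity) hu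
  rw [← InnerProductSpace.euclideanHausdorffMeasure_eq_volume,
    EuclideanGeometry.euclideanHausdorffMeasure_eq_lintegral (0 : E) hv hA]
  congr 1
  · rw [← ofReal_norm, ← ofReal_norm, ← ENNReal.ofReal_inv_of_pos hu', norm_smul, norm_inv,
      norm_pow, norm_norm]
    congr 1
    field_simp
  · refine lintegral_congr fun s => ?_
    congr 2
    ext y
    simp only [SetLike.mem_coe, AffineSubspace.mem_mk', vsub_eq_sub, vadd_eq_add, add_zero,
      Submodule.mem_orthogonal_singleton_iff_inner_right, mem_ofPred_eq]
    rw [inner_smul_left, inner_sub_right, inner_smul_right, inner_smul_right,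
      real_inner_self_eq_norm_sq, inv_mul_cancel₀ (by positivity), mul_one]
    simp [hu, sub_eq_zero]

theorem lintegral_Ioc_ofReal_pow (n : ℕ) :
    ∫⁻ s in Ioc (0 : ℝ) 1, ENNReal.ofReal (s ^ n) = ((n : ℝ≥0∞) + 1)⁻¹ := by
  rw [← ofReal_integral_eq_lintegral_ofReal (continuous_pow n).integrableOn_Ioc
      (ae_restrict_of_forall_mem measurableSet_Ioc fun s hs => pow_nonneg hs.1.le n),
    ← intervalIntegral.integral_of_le zero_le_one, integral_pow]
  rw [one_pow, zero_pow n.succ_ne_zero, sub_zero, one_div,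
    ENNReal.ofReal_inv_of_pos (by positivity)]
  norm_cast

theorem volume_Ioc_smul_of_subset_hyperplane (hu : u ≠ 0) (hB : B ⊆ {x | ⟪u, x⟫ = 1})
    (hBm : MeasurableSet B) :
    volume (Ioc (0 : ℝ) 1 • B) =
      (finrank ℝ E : ℝ≥0∞)⁻¹ * ‖u‖ₑ⁻¹ * μHE[finrank ℝ E - 1] B := by
  have : Nontrivial E := nontrivial_of_ne u 0 hu
  have hu_cont : Continuous fun y : E => ⟪u, y⟫ := by fun_prop
  have hcone : MeasurableSet (Ioc (0 : ℝ) 1 • B) := by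
    rw [Ioc_smul_eq_of_subset_hyperplane hB]
    exact (hu_cont.measurable measurableSet_Ioc).inter
      ((hu_cont.measurable.inv.smul measurable_id) hBm)
  have hfinrank : ((finrank ℝ E - 1 : ℕ) : ℝ≥0∞) + 1 = finrank ℝ E := by
    exact_mod_cast Nat.sub_add_cancel Module.finrank_pos
  rw [volume_eq_lintegral_inter_hyperplane hu hcone, lintegral_congr
      (euclideanHausdorffMeasure_Ioc_smul_inter_hyperplane hB _),
    lintegral_indicator measurableSet_Ioc, lintegral_mul_const _ (by fun_prop),
    lintegral_Ioc_ofReal_pow, hfinrank]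
  ring

end Cone

section Subdifferential

variable {E : Type*} [NormedAddCommGroup E] [InnerProductSpace ℝ E]

/-- The set of subgradients at `x` of a real function on an inner product space. -/
def subdifferential (g : E → ℝ) (x : E) : Set E :=
  {u | ∀ z, g x + ⟪u, z - x⟫ ≤ g z}

variable {g : E → ℝ} {u x : E}

theorem mem_subdifferential : u ∈ subdifferential g x ↔ ∀ z, g x + ⟪u, z - x⟫ ≤ g z := Iff.rfl

theorem eq_gradient_of_mem_subdifferential [CompleteSpace E] (hu : u ∈ subdifferential g x)
    (hg : DifferentiableAt ℝ g x) : u = ∇ g x := by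
  have hmin : IsLocalMin (fun z => g z - InnerProductSpace.toDual ℝ E u z) x := by
    refine Filter.Eventually.of_forall fun z => ?_
    have hz := hu z
    simp only [InnerProductSpace.toDual_apply_apply]
    rw [inner_sub_right] at hz
    linarith
  have hderiv := hmin.hasFDerivAt_eq_zero
    (hg.hasFDerivAt.sub (InnerProductSpace.toDual ℝ E u).hasFDerivAt)
  rw [gradient, sub_eq_zero.1 hderiv, LinearIsometryEquiv.symm_apply_apply]

variable (hg : ∀ c : ℝ, 0 < c → ∀ x, g (c • x) = c * g x)

include hg

theorem mem_subdifferential_iff_of_homogeneous :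
    u ∈ subdifferential g x ↔ ⟪u, x⟫ = g x ∧ ∀ z, ⟪u, z⟫ ≤ g z := by
  simp only [mem_subdifferential, inner_sub_right]
  constructor
  · intro hu
    have hx : ⟪u, x⟫ = g x := by
      have hdouble := hu ((2 : ℝ) • x)
      have hhalf := hu ((2⁻¹ : ℝ) • x)
      rw [hg _ (by positivity), inner_smul_right] at hdouble hhalf
      linarith
    exact ⟨hx, fun z => by linarith [hu z]⟩
  · rintro ⟨hx, hz⟩ z
    linarith [hz z]

theorem subdifferential_smul {c : ℝ} (hc : 0 < c) (x : E) :
    subdifferential g (c • x) = subdifferential g x := by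
  ext u
  rw [mem_subdifferential_iff_of_homogeneous hg, mem_subdifferential_iff_of_homogeneous hg,
    hg c hc, inner_smul_right, mul_right_inj' hc.ne']

theorem gradient_smul_of_homogeneous [CompleteSpace E] {c : ℝ} (hc : 0 < c) (x : E) :
    ∇ g (c • x) = ∇ g x := by
  have hcomp : (fun y => g (c • y)) = c • g := funext fun y => hg c hc y
  have hderiv := fderiv_comp_smul (𝕜 := ℝ) (f := g) (x := x) c
  rw [hcomp, fderiv_const_smul_field] at hderiv
  rw [gradient, gradient, smul_right_injective _ hc.ne' hderiv]

theorem differentiableAt_smul_iff_of_homogeneous {c : ℝ} (hc : 0 < c) (x : E) :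
    DifferentiableAt ℝ g (c • x) ↔ DifferentiableAt ℝ g x := by
  have hscale : ∀ {c : ℝ}, 0 < c → ∀ {x},
      DifferentiableAt ℝ g (c • x) → DifferentiableAt ℝ g x := by
    intro c hc x hx
    have hcomp : g = fun y => c⁻¹ * g (c • y) := funext fun y => by
      rw [hg c hc, inv_mul_cancel_left₀ hc.ne']
    rw [hcomp]
    exact (hx.comp x (differentiableAt_id.const_smul c)).const_mul c⁻¹
  refine ⟨hscale hc, fun hx => hscale (inv_pos.2 hc) ?_⟩
  rwa [inv_smul_smul₀ hc.ne']

theorem nonempty_subdifferential_of_sublinear [FiniteDimensional ℝ E]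
    (hadd : ∀ x y, g (x + y) ≤ g x + g y) (x : E) : (subdifferential g x).Nonempty := by
  have hg0 : g 0 = 0 := by
    have h := hg 2 two_pos 0
    rw [smul_zero] at h
    linarith
  have hline : ∀ c : ℝ, c * g x ≤ g (c • x) := by
    intro c
    rcases lt_trichotomy c 0 with hc | rfl | hc
    · have hneg := hg (-c) (neg_pos.2 hc) x
      have hsum := hadd (c • x) (-c • x)
      rw [← add_smul, add_neg_cancel, zero_smul, hg0, hneg] at hsum
      linarith
    · rw [zero_mul, zero_smul, hg0]
    · exact (hg c hc x).ge
  obtain ⟨f, hfx, hfg⟩ := exists_extension_of_le_sublinear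
    (LinearPMap.mkSpanSingleton' x (g x) fun c hc => by
      rcases smul_eq_zero.1 hc with rfl | rfl
      · exact zero_smul ℝ _
      · rw [hg0, smul_zero]) g hg hadd (by
    rintro ⟨y, hy⟩
    obtain ⟨c, rfl⟩ := Submodule.mem_span_singleton.1 hy
    rw [LinearPMap.mkSpanSingleton'_apply]
    exact hline c)
  have hf : ∀ z, ⟪(InnerProductSpace.toDual ℝ E).symm f.toContinuousLinearMap, z⟫ = f z :=
    fun z => InnerProductSpace.toDual_symm_apply
  refine ⟨_, (mem_subdifferential_iff_of_homogeneous hg).2 ⟨?_, fun z => (hf z).trans_le (hfg z)⟩⟩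
  rw [hf]
  refine (hfx ⟨x, Submodule.mem_span_singleton_self x⟩).trans ?_
  exact LinearPMap.mkSpanSingleton'_apply_self ..

end Subdifferential

section Flattening

variable {E : Type*} [NormedAddCommGroup E] [InnerProductSpace ℝ E]

/-- The points at which some subgradient of `g` is close to `w`, relative to the distortion `θ`
which `flatten g w` is allowed to have there. -/
def flatRegion (g : E → ℝ) (w : E) (θ : ℝ≥0) : Set E :=
  {y | ∃ u ∈ subdifferential g y, ‖u - w‖ ≤ (1 - (θ : ℝ)⁻¹) * ‖w‖}

/-- The displacement along `w` that carries the level sets of `g` to those of `⟪w, ·⟫`. -/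
def flatten (g : E → ℝ) (w y : E) : E :=
  y + (g y - ⟪w, y⟫) • (‖w‖ ^ 2)⁻¹ • w

variable {g : E → ℝ} {w : E} {θ : ℝ≥0} {A : Set E}

theorem inner_flatten (hw : w ≠ 0) (y : E) : ⟪w, flatten g w y⟫ = g y := by
  have hw' : ‖w‖ ≠ 0 := norm_ne_zero_iff.2 hw
  rw [flatten, inner_add_right, inner_smul_right, inner_smul_right, real_inner_self_eq_norm_sq,
    inv_mul_cancel₀ (pow_ne_zero 2 hw')]
  ring

theorem flatten_sub_flatten (x y : E) :
    flatten g w x - flatten g w y =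
      (x - y) + ((g x - ⟪w, x⟫) - (g y - ⟪w, y⟫)) • (‖w‖ ^ 2)⁻¹ • w := by
  rw [flatten, flatten, sub_smul (g x - ⟪w, x⟫)]
  abel

theorem two_sub_inv_le {a : ℝ} (ha : 0 < a) : 2 - a⁻¹ ≤ a := by
  have hsq : a + a⁻¹ - 2 = (a - 1) ^ 2 * a⁻¹ := by field_simp; ring
  linarith [show 0 ≤ (a - 1) ^ 2 * a⁻¹ by positivity]

theorem sub_inner_sub_le_of_mem_subdifferential {u x : E} (hu : u ∈ subdifferential g x) (y : E) :
    (g x - ⟪w, x⟫) - (g y - ⟪w, y⟫) ≤ ‖u - w‖ * ‖x - y‖ := by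
  refine le_trans ?_ (real_inner_le_norm (u - w) (x - y))
  have hy := hu y
  simp only [inner_sub_left, inner_sub_right] at hy ⊢
  linarith

theorem norm_flatten_displacement_sub_le (hw : w ≠ 0) {x y : E} (hx : x ∈ flatRegion g w θ)
    (hy : y ∈ flatRegion g w θ) :
    ‖((g x - ⟪w, x⟫) - (g y - ⟪w, y⟫)) • (‖w‖ ^ 2)⁻¹ • w‖ ≤ (1 - (θ : ℝ)⁻¹) * ‖x - y‖ := by
  obtain ⟨u, hu, huw⟩ := hx
  obtain ⟨v, hv, hvw⟩ := hy
  have habs : |(g x - ⟪w, x⟫) - (g y - ⟪w, y⟫)| ≤ (1 - (θ : ℝ)⁻¹) * ‖w‖ * ‖x - y‖ := by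
    refine abs_le'.2 ⟨(sub_inner_sub_le_of_mem_subdifferential hu y).trans (by gcongr), ?_⟩
    rw [neg_sub, norm_sub_rev]
    exact (sub_inner_sub_le_of_mem_subdifferential hv x).trans (by gcongr)
  have : 0 < ‖w‖ := norm_pos_iff.2 hw
  rw [norm_smul, norm_smul, norm_inv, norm_pow, norm_norm, Real.norm_eq_abs]
  calc _ ≤ (1 - (θ : ℝ)⁻¹) * ‖w‖ * ‖x - y‖ * ((‖w‖ ^ 2)⁻¹ * ‖w‖) := by gcongr
    _ = (1 - (θ : ℝ)⁻¹) * ‖x - y‖ := by field_simp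

theorem lipschitzOnWith_flatten (hw : w ≠ 0) (hθ : 1 < θ) (hA : A ⊆ flatRegion g w θ) :
    LipschitzOnWith θ (flatten g w) A := by
  refine LipschitzOnWith.of_dist_le_mul fun x hx y hy => ?_
  have hdisp := norm_flatten_displacement_sub_le hw (hA hx) (hA hy)
  have hθ' := two_sub_inv_le (a := (θ : ℝ)) (by positivity)
  rw [dist_eq_norm, dist_eq_norm, flatten_sub_flatten]
  calc _ ≤ ‖x - y‖ + (1 - (θ : ℝ)⁻¹) * ‖x - y‖ := (norm_add_le _ _).trans (by gcongr)
    _ = (2 - (θ : ℝ)⁻¹) * ‖x - y‖ := by ring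
    _ ≤ θ * ‖x - y‖ := by gcongr

theorem antilipschitzWith_flatten (hw : w ≠ 0) (hθ : 1 < θ) (hA : A ⊆ flatRegion g w θ) :
    AntilipschitzWith θ (A.domRestrict (flatten g w)) := by
  refine AntilipschitzWith.of_le_mul_dist fun ⟨x, hx⟩ ⟨y, hy⟩ => ?_
  have hdisp := norm_flatten_displacement_sub_le hw (hA hx) (hA hy)
  have hθ0 : (0 : ℝ) < θ := by positivity
  rw [Subtype.dist_eq, dist_eq_norm, dist_eq_norm, ← inv_mul_le_iff₀ hθ0, domRestrict_apply,
    domRestrict_apply, flatten_sub_flatten]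
  have htri := norm_sub_le_norm_add (x - y) (((g x - ⟪w, x⟫) - (g y - ⟪w, y⟫)) • (‖w‖ ^ 2)⁻¹ • w)
  linarith

theorem isClosed_flatRegion [FiniteDimensional ℝ E] (hg : Continuous g) (w : E) (θ : ℝ≥0) :
    IsClosed (flatRegion g w θ) := by
  set B := Metric.closedBall w ((1 - (θ : ℝ)⁻¹) * ‖w‖)
  have : CompactSpace B := isCompact_iff_compactSpace.1 (isCompact_closedBall _ _)
  have hgraph : IsClosed {p : E × B | ∀ z, g p.1 + ⟪(p.2 : E), z - p.1⟫ ≤ g z} := by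
    rw [ofPred_forall]
    exact isClosed_iInter fun z => isClosed_le (by fun_prop) continuous_const
  have hproj : flatRegion g w θ =
      Prod.fst '' {p : E × B | ∀ z, g p.1 + ⟪(p.2 : E), z - p.1⟫ ≤ g z} := by
    ext y
    constructor
    · rintro ⟨u, hu, huw⟩
      exact ⟨(y, ⟨u, mem_closedBall_iff_norm.2 huw⟩), hu, rfl⟩
    · rintro ⟨⟨y, u, hu⟩, hyu, rfl⟩
      exact ⟨u, hyu, mem_closedBall_iff_norm.1 hu⟩
  rw [hproj]
  exact isClosedMap_fst_of_compactSpace _ hgraph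

section Homogeneous

variable (hg : ∀ c : ℝ, 0 < c → ∀ x, g (c • x) = c * g x)

include hg

theorem flatten_smul {c : ℝ} (hc : 0 < c) (y : E) :
    flatten g w (c • y) = c • flatten g w y := by
  rw [flatten, flatten, hg c hc, inner_smul_right, smul_add, smul_smul c, mul_sub]

theorem Ioc_smul_subset_flatRegion (hA : A ⊆ flatRegion g w θ) :
    Ioc (0 : ℝ) 1 • A ⊆ flatRegion g w θ := by
  rintro _ ⟨c, hc, x, hx, rfl⟩
  simp only [flatRegion, mem_ofPred_eq, subdifferential_smul hg hc.1]
  exact hA hx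

theorem image_flatten_Ioc_smul (A : Set E) :
    flatten g w '' (Ioc (0 : ℝ) 1 • A) = Ioc (0 : ℝ) 1 • (flatten g w '' A) := by
  ext z
  constructor
  · rintro ⟨_, ⟨c, hc, x, hx, rfl⟩, rfl⟩
    exact ⟨c, hc, _, mem_image_of_mem _ hx, (flatten_smul hg hc.1 x).symm⟩
  · rintro ⟨c, hc, _, ⟨x, hx, rfl⟩, rfl⟩
    exact ⟨_, ⟨c, hc, x, hx, rfl⟩, flatten_smul hg hc.1 x⟩

end Homogeneous

section Volume

variable [FiniteDimensional ℝ E] [MeasurableSpace E] [BorelSpace E]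
  (hg : ∀ c : ℝ, 0 < c → ∀ x, g (c • x) = c * g x)

include hg

theorem volume_image_flatten_Ioc_smul (hw : w ≠ 0) (hθ : 1 < θ) (hA : A ⊆ flatRegion g w θ)
    (hA1 : ∀ x ∈ A, g x = 1) (hAm : MeasurableSet A) :
    volume (flatten g w '' (Ioc (0 : ℝ) 1 • A)) =
      (finrank ℝ E : ℝ≥0∞)⁻¹ * ‖w‖ₑ⁻¹ * μHE[finrank ℝ E - 1] (flatten g w '' A) := by
  have hinj : InjOn (flatten g w) A :=
    injOn_iff_injective.2 (antilipschitzWith_flatten hw hθ hA).injective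
  rw [image_flatten_Ioc_smul hg, volume_Ioc_smul_of_subset_hyperplane hw]
  · rintro _ ⟨x, hx, rfl⟩
    exact (inner_flatten hw x).trans (hA1 x hx)
  · exact hAm.image_of_continuousOn_injOn
      (lipschitzOnWith_flatten hw hθ hA).continuousOn hinj

theorem volume_Ioc_smul_le (hw : w ≠ 0) (hθ : 1 < θ) (hA : A ⊆ flatRegion g w θ)
    (hA1 : ∀ x ∈ A, g x = 1) (hAm : MeasurableSet A) :
    volume (Ioc (0 : ℝ) 1 • A) ≤ (θ : ℝ≥0∞) ^ (2 * finrank ℝ E) *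
      ((finrank ℝ E : ℝ≥0∞)⁻¹ * ‖w‖ₑ⁻¹ * μHE[finrank ℝ E - 1] A) := by
  have hcone := Ioc_smul_subset_flatRegion hg hA
  have hθ1 : (1 : ℝ≥0∞) ≤ θ := by exact_mod_cast hθ.le
  set d := finrank ℝ E
  calc volume (Ioc (0 : ℝ) 1 • A)
      ≤ (θ : ℝ≥0∞) ^ d * volume (flatten g w '' (Ioc (0 : ℝ) 1 • A)) := by
        rw [← InnerProductSpace.euclideanHausdorffMeasure_eq_volume]
        exact le_euclideanHausdorffMeasure_image
          (antilipschitzWith_flatten hw hθ hcone) d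
    _ = (θ : ℝ≥0∞) ^ d * ((d : ℝ≥0∞)⁻¹ * ‖w‖ₑ⁻¹ * μHE[d - 1] (flatten g w '' A)) := by
        rw [volume_image_flatten_Ioc_smul hg hw hθ hA hA1 hAm]
    _ ≤ (θ : ℝ≥0∞) ^ d * ((d : ℝ≥0∞)⁻¹ * ‖w‖ₑ⁻¹ * ((θ : ℝ≥0∞) ^ (d - 1) * μHE[d - 1] A)) := by
        gcongr
        exact euclideanHausdorffMeasure_image_le (lipschitzOnWith_flatten hw hθ hA) _
    _ = (θ : ℝ≥0∞) ^ (d + (d - 1)) * ((d : ℝ≥0∞)⁻¹ * ‖w‖ₑ⁻¹ * μHE[d - 1] A) := by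
        rw [pow_add]; ring
    _ ≤ _ := by
        gcongr ?_ * _
        exact pow_le_pow_right₀ hθ1 (by omega)

theorem le_volume_Ioc_smul (hw : w ≠ 0) (hθ : 1 < θ) (hA : A ⊆ flatRegion g w θ)
    (hA1 : ∀ x ∈ A, g x = 1) (hAm : MeasurableSet A) :
    (finrank ℝ E : ℝ≥0∞)⁻¹ * ‖w‖ₑ⁻¹ * μHE[finrank ℝ E - 1] A ≤
      (θ : ℝ≥0∞) ^ (2 * finrank ℝ E) * volume (Ioc (0 : ℝ) 1 • A) := by
  have hcone := Ioc_smul_subset_flatRegion hg hA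
  have hθ1 : (1 : ℝ≥0∞) ≤ θ := by exact_mod_cast hθ.le
  set d := finrank ℝ E
  calc (d : ℝ≥0∞)⁻¹ * ‖w‖ₑ⁻¹ * μHE[d - 1] A
      ≤ (d : ℝ≥0∞)⁻¹ * ‖w‖ₑ⁻¹ * ((θ : ℝ≥0∞) ^ (d - 1) * μHE[d - 1] (flatten g w '' A)) := by
        gcongr
        exact le_euclideanHausdorffMeasure_image (antilipschitzWith_flatten hw hθ hA) _
    _ = (θ : ℝ≥0∞) ^ (d - 1) * volume (flatten g w '' (Ioc (0 : ℝ) 1 • A)) := by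
        rw [volume_image_flatten_Ioc_smul hg hw hθ hA hA1 hAm]; ring
    _ ≤ (θ : ℝ≥0∞) ^ (d - 1) * ((θ : ℝ≥0∞) ^ d * volume (Ioc (0 : ℝ) 1 • A)) := by
        rw [← InnerProductSpace.euclideanHausdorffMeasure_eq_volume]
        gcongr
        exact euclideanHausdorffMeasure_image_le (lipschitzOnWith_flatten hw hθ hcone) d
    _ = (θ : ℝ≥0∞) ^ ((d - 1) + d) * volume (Ioc (0 : ℝ) 1 • A) := by
        rw [pow_add]; ring
    _ ≤ _ := by
        gcongr ?_ * _
        exact pow_le_pow_right₀ hθ1 (by omega)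

end Volume

end Flattening

section NearbyPieces

theorem le_of_forall_one_lt_le_pow_mul {a b : ℝ≥0∞} (k : ℕ)
    (h : ∀ θ : ℝ≥0, 1 < θ → a ≤ (θ : ℝ≥0∞) ^ k * b) : a ≤ b := by
  have hcont : Continuous fun θ : ℝ≥0 => (θ : ℝ≥0∞) ^ k :=
    (ENNReal.continuous_pow k).comp ENNReal.continuous_coe
  have hlim : Filter.Tendsto (fun θ : ℝ≥0 => (θ : ℝ≥0∞) ^ k * b) (𝓝[>] 1) (𝓝 (1 * b)) := by
    refine ENNReal.Tendsto.mul_const ?_ (.inl one_ne_zero)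
    simpa only [ENNReal.coe_one, one_pow] using (hcont.tendsto 1).mono_left nhdsWithin_le_nhds
  rw [one_mul] at hlim
  exact ge_of_tendsto hlim (Filter.eventually_of_mem self_mem_nhdsWithin h)

theorem measure_le_of_countable_cover {α : Type*} [MeasurableSpace α] {μ ν : Measure α}
    {s : ℕ → Set α} (hs : ∀ n, MeasurableSet (s n)) (hμ : μ (⋃ n, s n)ᶜ = 0)
    (h : ∀ n, ∀ A ⊆ s n, MeasurableSet A → μ A ≤ ν A) : μ ≤ ν := by
  refine Measure.le_iff.2 fun A hA => ?_
  have hmeas : ∀ n, MeasurableSet (A ∩ disjointed s n) :=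
    fun n => hA.inter (MeasurableSet.disjointed hs n)
  have hdisj : Pairwise (Function.onFun Disjoint fun n => A ∩ disjointed s n) :=
    fun i j hij => (disjoint_disjointed s hij).mono inter_subset_right inter_subset_right
  calc μ A ≤ μ (⋃ n, A ∩ disjointed s n) + μ (⋃ n, s n)ᶜ := by
        rw [← inter_iUnion, iUnion_disjointed]
        exact (measure_le_inter_add_sdiff μ A _).trans
          (by gcongr; exact sdiff_subset_compl A _)
    _ = ∑' n, μ (A ∩ disjointed s n) := by rw [hμ, add_zero, measure_iUnion hdisj hmeas]
    _ ≤ ∑' n, ν (A ∩ disjointed s n) := ENNReal.tsum_le_tsum fun n =>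
        h n _ (inter_subset_right.trans (disjointed_subset s n)) (hmeas n)
    _ = ν (⋃ n, A ∩ disjointed s n) := (measure_iUnion hdisj hmeas).symm
    _ ≤ ν A := measure_mono (iUnion_subset fun n => inter_subset_left)

variable {E : Type*} [NormedAddCommGroup E] {v w : E} {θ : ℝ≥0}

theorem exists_denseSeq_norm_sub_le [SecondCountableTopology E] (hv : v ≠ 0) {δ : ℝ} (hδ : 0 < δ) :
    ∃ n, ‖v - TopologicalSpace.denseSeq E n‖ ≤ δ * ‖TopologicalSpace.denseSeq E n‖ := by
  have hopen : IsOpen {w : E | ‖v - w‖ < δ * ‖w‖} := isOpen_lt (by fun_prop) (by fun_prop)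
  obtain ⟨n, hn⟩ := (TopologicalSpace.denseRange_denseSeq E).exists_mem_open hopen
    ⟨v, by simpa using mul_pos hδ (norm_pos_iff.2 hv)⟩
  exact ⟨n, hn.le⟩

theorem enorm_le_mul_enorm_of_norm_sub_le_right (hθ : 1 < θ)
    (h : ‖v - w‖ ≤ (1 - (θ : ℝ)⁻¹) * ‖w‖) :
    ‖v‖ₑ ≤ θ * ‖w‖ₑ := by
  have hnorm : ‖v‖ ≤ θ * ‖w‖ := by
    have htri := norm_sub_norm_le v w
    have hθ' : (1 : ℝ) - (θ : ℝ)⁻¹ ≤ θ - 1 := by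
      linarith [two_sub_inv_le (a := (θ : ℝ)) (by positivity)]
    nlinarith [norm_nonneg w]
  rw [enorm_eq_nnnorm, enorm_eq_nnnorm]
  exact_mod_cast hnorm

theorem enorm_le_mul_enorm_of_norm_sub_le_left (hθ : 1 < θ)
    (h : ‖v - w‖ ≤ (1 - (θ : ℝ)⁻¹) * ‖w‖) :
    ‖w‖ₑ ≤ θ * ‖v‖ₑ := by
  have hnorm : ‖w‖ ≤ θ * ‖v‖ := by
    have hθ0 : (0 : ℝ) < θ := by positivity
    rw [← inv_mul_le_iff₀ hθ0]
    have htri := norm_sub_norm_le w v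
    rw [norm_sub_rev] at htri
    linarith
  rw [enorm_eq_nnnorm, enorm_eq_nnnorm]
  exact_mod_cast hnorm

theorem enorm_inv_le_mul_enorm_inv (hθ : 1 < θ) (h : ‖v‖ₑ ≤ θ * ‖w‖ₑ) :
    ‖w‖ₑ⁻¹ ≤ θ * ‖v‖ₑ⁻¹ := by
  have hθ0 : (θ : ℝ≥0∞) ≠ 0 := by exact_mod_cast (zero_lt_one.trans hθ).ne'
  rw [← ENNReal.inv_mul_le_iff hθ0 ENNReal.coe_ne_top,
    ← ENNReal.mul_inv (.inl hθ0) (.inl ENNReal.coe_ne_top)]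
  exact ENNReal.inv_le_inv.2 h

theorem measure_le_of_forall_near [MeasurableSpace E] [BorelSpace E] [SecondCountableTopology E]
    {α : Type*} [MeasurableSpace α] {μ ν : Measure α} {G : α → E} (hG : Measurable G) {S : Set α}
    (hS : MeasurableSet S) (hGS : ∀ x ∈ S, G x ≠ 0) (hμ : μ Sᶜ = 0) (k : ℕ)
    (h : ∀ θ : ℝ≥0, 1 < θ → ∀ w, w ≠ 0 → ∀ A ⊆ S, MeasurableSet A →
      (∀ x ∈ A, ‖G x - w‖ ≤ (1 - (θ : ℝ)⁻¹) * ‖w‖) → μ A ≤ (θ : ℝ≥0∞) ^ k * ν A) :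
    μ ≤ ν := by
  refine Measure.le_iff'.2 fun B => le_of_forall_one_lt_le_pow_mul k fun θ hθ => ?_
  suffices hle : μ ≤ (θ : ℝ≥0∞) ^ k • ν from hle B
  have hδ : 0 < 1 - (θ : ℝ)⁻¹ := sub_pos.2 (inv_lt_one_of_one_lt₀ hθ)
  set piece : ℕ → Set α := fun n => S ∩ {x | ‖G x - TopologicalSpace.denseSeq E n‖ ≤
    (1 - (θ : ℝ)⁻¹) * ‖TopologicalSpace.denseSeq E n‖}
  have hcover : (⋃ n, piece n) = S := by
    refine subset_antisymm (iUnion_subset fun n => inter_subset_left) fun x hx => ?_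
    obtain ⟨n, hn⟩ := exists_denseSeq_norm_sub_le (hGS x hx) hδ
    exact mem_iUnion.2 ⟨n, hx, hn⟩
  refine measure_le_of_countable_cover
    (fun n => hS.inter (measurableSet_le (hG.sub_const _).norm measurable_const))
    (hcover.symm ▸ hμ) fun n A hA hAm => ?_
  rcases A.eq_empty_or_nonempty with rfl | ⟨x, hx⟩
  · rw [measure_empty]
    exact zero_le
  refine h θ hθ (TopologicalSpace.denseSeq E n) (fun hw => hGS x (hA hx).1 ?_) A
    (fun y hy => (hA hy).1) hAm fun y hy => (hA hy).2
  have hnear := (hA hx).2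
  rwa [mem_ofPred_eq, hw, norm_zero, mul_zero, sub_zero, norm_le_zero_iff] at hnear

end NearbyPieces

/-- A convex body with the origin in its interior, so that its gauge is a finite, continuous,
sublinear function which is positive away from the origin. -/
structure IsCenteredBody {E : Type*} [NormedAddCommGroup E] [NormedSpace ℝ E] (K : Set E) :
    Prop where
  convex : Convex ℝ K
  isCompact : IsCompact K
  zero_mem_interior : 0 ∈ interior K

theorem gauge_smul_of_pos {E : Type*} [AddCommGroup E] [Module ℝ E] (K : Set E) (c : ℝ)
    (hc : 0 < c) (x : E) : gauge K (c • x) = c * gauge K x := by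
  rw [gauge_smul_of_nonneg hc.le, smul_eq_mul]

theorem measurable_gradient {E : Type*} [NormedAddCommGroup E] [InnerProductSpace ℝ E]
    [CompleteSpace E] [MeasurableSpace E] [BorelSpace E] (g : E → ℝ) : Measurable (∇ g) :=
  (InnerProductSpace.toDual ℝ E).symm.continuous.measurable.comp (measurable_fderiv ℝ g)

namespace IsCenteredBody

section Normed

variable {E : Type*} [NormedAddCommGroup E] [NormedSpace ℝ E] {K : Set E} {x : E}

theorem mem_nhds (hK : IsCenteredBody K) : K ∈ 𝓝 (0 : E) :=
  mem_interior_iff_mem_nhds.1 hK.zero_mem_interior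

theorem absorbent (hK : IsCenteredBody K) : Absorbent ℝ K := absorbent_nhds_zero hK.mem_nhds

theorem continuous_gauge (hK : IsCenteredBody K) : Continuous (gauge K) :=
  _root_.continuous_gauge hK.convex hK.mem_nhds

theorem gauge_pos (hK : IsCenteredBody K) (hx : x ≠ 0) : 0 < gauge K x :=
  (_root_.gauge_pos hK.absorbent
    (NormedSpace.isVonNBounded_of_isBounded ℝ hK.isCompact.isBounded)).2 hx

theorem gauge_le_one_iff (hK : IsCenteredBody K) : gauge K x ≤ 1 ↔ x ∈ K := by
  rw [gauge_le_one_iff_mem_closure hK.convex hK.mem_nhds, hK.isCompact.isClosed.closure_eq]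

theorem gauge_eq_one_iff (hK : IsCenteredBody K) : gauge K x = 1 ↔ x ∈ frontier K :=
  gauge_eq_one_iff_mem_frontier hK.convex hK.mem_nhds

end Normed

section Gradient

variable {E : Type*} [NormedAddCommGroup E] [InnerProductSpace ℝ E] {K : Set E} {x : E}

theorem ne_zero_of_mem_subdifferential_gauge (hK : IsCenteredBody K) (hx : x ∈ frontier K) {u : E}
    (hu : u ∈ subdifferential (gauge K) x) : u ≠ 0 := by
  rintro rfl
  have h := ((mem_subdifferential_iff_of_homogeneous (gauge_smul_of_pos K)).1 hu).1
  rw [inner_zero_left, hK.gauge_eq_one_iff.2 hx] at h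
  exact zero_ne_one h

variable [FiniteDimensional ℝ E]

theorem nonempty_subdifferential_gauge (hK : IsCenteredBody K) (x : E) :
    (subdifferential (gauge K) x).Nonempty :=
  nonempty_subdifferential_of_sublinear (gauge_smul_of_pos K)
    (gauge_add_le hK.convex hK.absorbent) x

theorem gradient_gauge_mem_subdifferential (hK : IsCenteredBody K)
    (hx : DifferentiableAt ℝ (gauge K) x) : ∇ (gauge K) x ∈ subdifferential (gauge K) x := by
  obtain ⟨u, hu⟩ := hK.nonempty_subdifferential_gauge x
  exact eq_gradient_of_mem_subdifferential hu hx ▸ hu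

theorem inner_gradient_gauge_self (hK : IsCenteredBody K)
    (hx : DifferentiableAt ℝ (gauge K) x) : ⟪∇ (gauge K) x, x⟫ = gauge K x :=
  ((mem_subdifferential_iff_of_homogeneous (gauge_smul_of_pos K)).1
    (hK.gradient_gauge_mem_subdifferential hx)).1

theorem inner_gradient_gauge_le (hK : IsCenteredBody K) (x z : E) :
    ⟪∇ (gauge K) x, z⟫ ≤ gauge K z := by
  by_cases hx : DifferentiableAt ℝ (gauge K) x
  · exact ((mem_subdifferential_iff_of_homogeneous (gauge_smul_of_pos K)).1
      (hK.gradient_gauge_mem_subdifferential hx)).2 z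
  · rw [gradient_eq_zero_of_not_differentiableAt hx, inner_zero_left]
    exact gauge_nonneg z

theorem gradient_gauge_ne_zero (hK : IsCenteredBody K) (hx : x ∈ frontier K)
    (hd : DifferentiableAt ℝ (gauge K) x) : ∇ (gauge K) x ≠ 0 :=
  hK.ne_zero_of_mem_subdifferential_gauge hx (hK.gradient_gauge_mem_subdifferential hd)

variable [MeasurableSpace E] [BorelSpace E]

theorem ae_differentiableAt_gauge (hK : IsCenteredBody K) :
    ∀ᵐ y : E, DifferentiableAt ℝ (gauge K) y :=
  let ⟨_, h⟩ := hK.convex.lipschitz_gauge hK.mem_nhds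
  h.ae_differentiableAt

end Gradient

end IsCenteredBody

section ConeMeasure

variable {E : Type*} [NormedAddCommGroup E] [InnerProductSpace ℝ E]

/-- The part of the boundary of `K` where the gauge of `K` is differentiable, that is, where the
outward normal direction is unique. -/
def regularFrontier (K : Set E) : Set E :=
  frontier K ∩ {x | DifferentiableAt ℝ (gauge K) x}

/-- The central projection onto the boundary of `K`. -/
def radialProj (K : Set E) (y : E) : E :=
  (gauge K y)⁻¹ • y

/-- The normalized cone volume measure of `K`: the mass of a set `A` of boundary points is `dim E`
times the volume of the cone over `A` with apex at the origin. -/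
def coneMeasure [MeasurableSpace E] [BorelSpace E] [FiniteDimensional ℝ E] (K : Set E) :
    Measure E :=
  (finrank ℝ E : ℝ≥0∞) • Measure.map (radialProj K) (volume.restrict K)

theorem measurableSet_regularFrontier [MeasurableSpace E] [BorelSpace E] (K : Set E) :
    MeasurableSet (regularFrontier K) :=
  isClosed_frontier.measurableSet.inter (measurableSet_of_differentiableAt ℝ _)

namespace IsCenteredBody

variable {K A : Set E} {y : E}

theorem radialProj_mem_frontier (hK : IsCenteredBody K) (hy : y ≠ 0) :
    radialProj K y ∈ frontier K := by
  have hpos := hK.gauge_pos hy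
  rw [← hK.gauge_eq_one_iff, radialProj, gauge_smul_of_pos _ _ (inv_pos.2 hpos),
    inv_mul_cancel₀ hpos.ne']

theorem radialProj_preimage_inter (hK : IsCenteredBody K) (hA : A ⊆ frontier K) :
    radialProj K ⁻¹' A ∩ K = Ioc (0 : ℝ) 1 • A := by
  ext y
  constructor
  · rintro ⟨hy, hyK⟩
    have hpos : 0 < gauge K y := hK.gauge_pos <| by
      rintro rfl
      have hfr := hA hy
      rw [radialProj, smul_zero] at hfr
      exact hfr.2 hK.zero_mem_interior
    exact ⟨gauge K y, ⟨hpos, hK.gauge_le_one_iff.2 hyK⟩, _, hy, smul_inv_smul₀ hpos.ne' y⟩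
  · rintro ⟨c, hc, x, hx, rfl⟩
    have hgauge : gauge K (c • x) = c := by
      rw [gauge_smul_of_pos K c hc.1, hK.gauge_eq_one_iff.2 (hA hx), mul_one]
    refine ⟨?_, hK.gauge_le_one_iff.1 (hgauge.trans_le hc.2)⟩
    rwa [mem_preimage, radialProj, hgauge, inv_smul_smul₀ hc.1.ne']

theorem subset_flatRegion_of_near [FiniteDimensional ℝ E] {w : E} {θ : ℝ≥0}
    (hK : IsCenteredBody K) (hA : A ⊆ regularFrontier K)
    (hwA : ∀ x ∈ A, ‖∇ (gauge K) x - w‖ ≤ (1 - (θ : ℝ)⁻¹) * ‖w‖) :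
    A ⊆ flatRegion (gauge K) w θ :=
  fun x hx => ⟨_, hK.gradient_gauge_mem_subdifferential (hA hx).2, hwA x hx⟩

variable [MeasurableSpace E] [BorelSpace E] [FiniteDimensional ℝ E]

theorem measurable_radialProj (hK : IsCenteredBody K) : Measurable (radialProj K) :=
  hK.continuous_gauge.measurable.inv.smul measurable_id

theorem coneMeasure_apply (hK : IsCenteredBody K) (hA : A ⊆ frontier K) (hAm : MeasurableSet A) :
    coneMeasure K A = finrank ℝ E * volume (Ioc (0 : ℝ) 1 • A) := by
  rw [coneMeasure, Measure.smul_apply, Measure.map_apply hK.measurable_radialProj hAm,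
    Measure.restrict_apply (hK.measurable_radialProj hAm), hK.radialProj_preimage_inter hA,
    smul_eq_mul]

theorem volume_Ioc_smul_frontier_diff_regularFrontier (hK : IsCenteredBody K) :
    volume (Ioc (0 : ℝ) 1 • (frontier K \ regularFrontier K)) = 0 := by
  refine measure_mono_null ?_ (ae_iff.1 hK.ae_differentiableAt_gauge)
  rintro _ ⟨c, hc, x, hx, rfl⟩ hd
  exact hx.2
    ⟨hx.1, (differentiableAt_smul_iff_of_homogeneous (gauge_smul_of_pos K) hc.1 x).1 hd⟩

theorem hausdorffMeasure_frontier_diff_regularFrontier [Nontrivial E] (hK : IsCenteredBody K) :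
    μHE[finrank ℝ E - 1] (frontier K \ regularFrontier K) = 0 := by
  have hcover : frontier K \ regularFrontier K ⊆ ⋃ n, (frontier K \ regularFrontier K) ∩
      flatRegion (gauge K) (TopologicalSpace.denseSeq E n) 2 := by
    intro x hx
    obtain ⟨u, hu⟩ := hK.nonempty_subdifferential_gauge x
    obtain ⟨n, hn⟩ := exists_denseSeq_norm_sub_le
      (hK.ne_zero_of_mem_subdifferential_gauge hx.1 hu) (δ := 1 - (2 : ℝ)⁻¹) (by norm_num)
    exact mem_iUnion.2 ⟨n, hx, u, hu, by simpa using hn⟩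
  refine measure_mono_null hcover (measure_iUnion_null fun n => ?_)
  set w := TopologicalSpace.denseSeq E n
  rcases eq_empty_or_nonempty ((frontier K \ regularFrontier K) ∩ flatRegion (gauge K) w 2) with
    hempty | ⟨x, hx, u, hu, huw⟩
  · rw [hempty, measure_empty]
  have hw : w ≠ 0 := by
    intro hw
    rw [hw, sub_zero, norm_zero, mul_zero, norm_le_zero_iff] at huw
    exact hK.ne_zero_of_mem_subdifferential_gauge hx.1 hu huw
  have hle := le_volume_Ioc_smul (gauge_smul_of_pos K) hw one_lt_two inter_subset_right
    (fun x hx => hK.gauge_eq_one_iff.2 hx.1.1)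
    ((isClosed_frontier.measurableSet.diff (measurableSet_regularFrontier K)).inter
      (isClosed_flatRegion hK.continuous_gauge w 2).measurableSet)
  rw [measure_mono_null (smul_subset_smul_left inter_subset_left)
    hK.volume_Ioc_smul_frontier_diff_regularFrontier, mul_zero, nonpos_iff_eq_zero] at hle
  exact (mul_eq_zero.1 hle).resolve_left (by simp)

theorem ae_mem_regularFrontier [Nontrivial E] (hK : IsCenteredBody K) :
    ∀ᵐ x ∂μHE[finrank ℝ E - 1].restrict (frontier K), x ∈ regularFrontier K := by
  rw [ae_restrict_iff' isClosed_frontier.measurableSet, ae_iff]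
  simp only [Classical.not_imp]
  exact hK.hausdorffMeasure_frontier_diff_regularFrontier

theorem coneMeasure_compl_regularFrontier [Nontrivial E] (hK : IsCenteredBody K) :
    coneMeasure K (regularFrontier K)ᶜ = 0 := by
  have hm := (measurableSet_regularFrontier K).compl
  rw [coneMeasure, Measure.smul_apply, Measure.map_apply hK.measurable_radialProj hm]
  refine smul_eq_zero_of_right _ (Measure.absolutelyContinuous_of_le Measure.restrict_le_self ?_)
  refine measure_mono_null (t := {0} ∪ {y | ¬ DifferentiableAt ℝ (gauge K) y}) (fun y hy => ?_)
    (measure_union_null (measure_singleton 0) (ae_iff.1 hK.ae_differentiableAt_gauge))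
  refine or_iff_not_imp_left.2 fun hy0 hd => hy ⟨hK.radialProj_mem_frontier hy0, ?_⟩
  exact (differentiableAt_smul_iff_of_homogeneous (gauge_smul_of_pos K)
    (inv_pos.2 (hK.gauge_pos hy0)) y).2 hd

section Piece

variable [Nontrivial E] {w : E} {θ : ℝ≥0}

theorem finrank_mul_hyperplane_mass (w : E) (A : Set E) :
    (finrank ℝ E : ℝ≥0∞) * ((finrank ℝ E : ℝ≥0∞)⁻¹ * ‖w‖ₑ⁻¹ * μHE[finrank ℝ E - 1] A) =
      ∫⁻ _ in A, ‖w‖ₑ⁻¹ ∂μHE[finrank ℝ E - 1] := by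
  rw [setLIntegral_const, mul_assoc, ENNReal.mul_inv_cancel_left
    (Nat.cast_ne_zero.2 Module.finrank_pos.ne') (ENNReal.natCast_ne_top _)]

theorem coneMeasure_le_of_near (hK : IsCenteredBody K) (hw : w ≠ 0) (hθ : 1 < θ)
    (hA : A ⊆ regularFrontier K) (hAm : MeasurableSet A)
    (hwA : ∀ x ∈ A, ‖∇ (gauge K) x - w‖ ≤ (1 - (θ : ℝ)⁻¹) * ‖w‖) :
    coneMeasure K A ≤ (θ : ℝ≥0∞) ^ (2 * finrank ℝ E + 1) *
      ∫⁻ x in A, ‖∇ (gauge K) x‖ₑ⁻¹ ∂μHE[finrank ℝ E - 1] := by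
  have hAfr : A ⊆ frontier K := hA.trans inter_subset_left
  calc coneMeasure K A = finrank ℝ E * volume (Ioc (0 : ℝ) 1 • A) := hK.coneMeasure_apply hAfr hAm
    _ ≤ finrank ℝ E * ((θ : ℝ≥0∞) ^ (2 * finrank ℝ E) *
        ((finrank ℝ E : ℝ≥0∞)⁻¹ * ‖w‖ₑ⁻¹ * μHE[finrank ℝ E - 1] A)) := by
      gcongr
      exact volume_Ioc_smul_le (gauge_smul_of_pos K) hw hθ (hK.subset_flatRegion_of_near hA hwA)
        (fun x hx => hK.gauge_eq_one_iff.2 (hAfr hx)) hAm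
    _ = (θ : ℝ≥0∞) ^ (2 * finrank ℝ E) * ∫⁻ _ in A, ‖w‖ₑ⁻¹ ∂μHE[finrank ℝ E - 1] := by
      rw [mul_left_comm, finrank_mul_hyperplane_mass]
    _ ≤ (θ : ℝ≥0∞) ^ (2 * finrank ℝ E) *
        ∫⁻ x in A, θ * ‖∇ (gauge K) x‖ₑ⁻¹ ∂μHE[finrank ℝ E - 1] := by
      refine mul_le_mul_right (setLIntegral_mono' hAm fun x hx => ?_) _
      exact enorm_inv_le_mul_enorm_inv hθ (enorm_le_mul_enorm_of_norm_sub_le_right hθ (hwA x hx))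
    _ = _ := by rw [lintegral_const_mul' _ _ ENNReal.coe_ne_top, pow_succ, mul_assoc]

theorem le_coneMeasure_of_near (hK : IsCenteredBody K) (hw : w ≠ 0) (hθ : 1 < θ)
    (hA : A ⊆ regularFrontier K) (hAm : MeasurableSet A)
    (hwA : ∀ x ∈ A, ‖∇ (gauge K) x - w‖ ≤ (1 - (θ : ℝ)⁻¹) * ‖w‖) :
    ∫⁻ x in A, ‖∇ (gauge K) x‖ₑ⁻¹ ∂μHE[finrank ℝ E - 1] ≤
      (θ : ℝ≥0∞) ^ (2 * finrank ℝ E + 1) * coneMeasure K A := by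
  have hAfr : A ⊆ frontier K := hA.trans inter_subset_left
  calc ∫⁻ x in A, ‖∇ (gauge K) x‖ₑ⁻¹ ∂μHE[finrank ℝ E - 1]
      ≤ ∫⁻ _ in A, θ * ‖w‖ₑ⁻¹ ∂μHE[finrank ℝ E - 1] := by
        refine setLIntegral_mono' hAm fun x hx => ?_
        exact enorm_inv_le_mul_enorm_inv hθ (enorm_le_mul_enorm_of_norm_sub_le_left hθ (hwA x hx))
    _ = θ * (finrank ℝ E *
        ((finrank ℝ E : ℝ≥0∞)⁻¹ * ‖w‖ₑ⁻¹ * μHE[finrank ℝ E - 1] A)) := by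
      rw [lintegral_const_mul' _ _ ENNReal.coe_ne_top, finrank_mul_hyperplane_mass]
    _ ≤ θ * (finrank ℝ E * ((θ : ℝ≥0∞) ^ (2 * finrank ℝ E) * volume (Ioc (0 : ℝ) 1 • A))) := by
      gcongr θ * (finrank ℝ E * ?_)
      exact le_volume_Ioc_smul (gauge_smul_of_pos K) hw hθ (hK.subset_flatRegion_of_near hA hwA)
        (fun x hx => hK.gauge_eq_one_iff.2 (hAfr hx)) hAm
    _ = _ := by rw [hK.coneMeasure_apply hAfr hAm, pow_succ]; ring

end Piece

/-- The gradient of the gauge at a boundary point `x` is the outward normal divided by the distance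
of the supporting hyperplane at `x` from the origin; hence the cone over an area element `dA` at `x`
has volume `dA / (dim E * ‖∇ (gauge K) x‖)`. -/
theorem withDensity_enorm_gradient_gauge_inv [Nontrivial E] (hK : IsCenteredBody K) :
    (μHE[finrank ℝ E - 1].restrict (frontier K)).withDensity (fun x => ‖∇ (gauge K) x‖ₑ⁻¹) =
      coneMeasure K := by
  set S := regularFrontier K
  have hS : MeasurableSet S := measurableSet_regularFrontier K
  have hSfr : S ⊆ frontier K := inter_subset_left
  have happly : ∀ A ⊆ S, MeasurableSet A →
      (μHE[finrank ℝ E - 1].restrict (frontier K)).withDensity (fun x => ‖∇ (gauge K) x‖ₑ⁻¹) A =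
        ∫⁻ x in A, ‖∇ (gauge K) x‖ₑ⁻¹ ∂μHE[finrank ℝ E - 1] := fun A hA hAm => by
    rw [withDensity_apply _ hAm, Measure.restrict_restrict hAm,
      inter_eq_left.2 (hA.trans hSfr)]
  have hne : ∀ x ∈ S, ∇ (gauge K) x ≠ 0 := fun x hx => hK.gradient_gauge_ne_zero hx.1 hx.2
  refine le_antisymm ?_ ?_
  · refine measure_le_of_forall_near (measurable_gradient _) hS hne
      (withDensity_absolutelyContinuous _ _ hK.ae_mem_regularFrontier)
      (2 * finrank ℝ E + 1) fun θ hθ w hw A hA hAm hwA => ?_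
    rw [happly A hA hAm]
    exact hK.le_coneMeasure_of_near hw hθ hA hAm hwA
  · refine measure_le_of_forall_near (measurable_gradient _) hS hne
      hK.coneMeasure_compl_regularFrontier
      (2 * finrank ℝ E + 1) fun θ hθ w hw A hA hAm hwA => ?_
    rw [happly A hA hAm]
    exact hK.coneMeasure_le_of_near hw hθ hA hAm hwA

end IsCenteredBody

end ConeMeasure

section SurfaceMeasure

variable {m : ℕ} {K : Set (Euc m)} {x n : Euc m}

theorem isOutwardNormalAt_gaussMap (h : ∃ n, IsOutwardNormalAt K x n) :
    IsOutwardNormalAt K x (gaussMap K x) := by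
  rw [gaussMap, dif_pos h]
  exact h.choose_spec

namespace IsOutwardNormalAt

theorem inner_pos (hn : IsOutwardNormalAt K x n) (hK : IsCenteredBody K) : 0 < ⟪n, x⟫ := by
  obtain ⟨-, hnorm, hle⟩ := hn
  obtain ⟨r, hr, hball⟩ := Metric.nhds_basis_closedBall.mem_iff.1 hK.mem_nhds
  have hrn := hle (r • n) (hball (by
    rw [mem_closedBall_zero_iff, norm_smul, hnorm, mul_one, Real.norm_of_nonneg hr.le]))
  rw [inner_sub_left, real_inner_smul_left, real_inner_self_eq_norm_sq, hnorm,
    real_inner_comm] at hrn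
  linarith

theorem inner_inv_smul_mem_subdifferential (hn : IsOutwardNormalAt K x n)
    (hK : IsCenteredBody K) : ⟪n, x⟫⁻¹ • n ∈ subdifferential (gauge K) x := by
  have hpos := hn.inner_pos hK
  have hx : gauge K x = 1 := hK.gauge_eq_one_iff.2 hn.1
  refine (mem_subdifferential_iff_of_homogeneous (gauge_smul_of_pos K)).2 ⟨?_, fun z => ?_⟩
  · rw [real_inner_smul_left, inv_mul_cancel₀ hpos.ne', hx]
  rcases eq_or_ne z 0 with rfl | hz
  · rw [inner_zero_right, gauge_zero]
  have hproj := hn.2.2 _ (hK.isCompact.isClosed.frontier_subset (hK.radialProj_mem_frontier hz))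
  rw [radialProj, inner_sub_left, sub_nonpos, real_inner_smul_left, real_inner_comm n,
    real_inner_comm n, inv_mul_le_iff₀ (hK.gauge_pos hz)] at hproj
  rwa [real_inner_smul_left, inv_mul_le_iff₀ hpos, mul_comm]

theorem eq_inv_norm_smul_gradient (hn : IsOutwardNormalAt K x n) (hK : IsCenteredBody K)
    (hd : DifferentiableAt ℝ (gauge K) x) :
    n = ‖∇ (gauge K) x‖⁻¹ • ∇ (gauge K) x := by
  have hpos := hn.inner_pos hK
  rw [← eq_gradient_of_mem_subdifferential (hn.inner_inv_smul_mem_subdifferential hK) hd,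
    norm_smul, hn.2.1, mul_one, norm_inv, inv_inv, Real.norm_of_nonneg hpos.le,
    smul_inv_smul₀ hpos.ne']

end IsOutwardNormalAt

namespace IsCenteredBody

theorem isOutwardNormalAt_inv_norm_smul_gradient (hK : IsCenteredBody K)
    (hx : x ∈ regularFrontier K) :
    IsOutwardNormalAt K x (‖∇ (gauge K) x‖⁻¹ • ∇ (gauge K) x) := by
  refine ⟨hx.1, norm_smul_inv_norm (hK.gradient_gauge_ne_zero hx.1 hx.2), fun y hy => ?_⟩
  rw [real_inner_smul_right, real_inner_comm, inner_sub_right,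
    hK.inner_gradient_gauge_self hx.2, hK.gauge_eq_one_iff.2 hx.1]
  refine mul_nonpos_of_nonneg_of_nonpos (by positivity) (sub_nonpos.2 ?_)
  exact (hK.inner_gradient_gauge_le x y).trans (hK.gauge_le_one_iff.2 hy)

theorem gaussMap_eq_inv_norm_smul_gradient (hK : IsCenteredBody K) (hx : x ∈ regularFrontier K) :
    gaussMap K x = ‖∇ (gauge K) x‖⁻¹ • ∇ (gauge K) x :=
  (isOutwardNormalAt_gaussMap
    ⟨_, hK.isOutwardNormalAt_inv_norm_smul_gradient hx⟩).eq_inv_norm_smul_gradient hK hx.2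

theorem lintegral_frontier_comp_gaussMap [Nontrivial (Euc m)] (hK : IsCenteredBody K)
    {f : Euc m → ℝ≥0∞} (hf : Measurable f)
    (hfc : ∀ c : ℝ, 0 < c → ∀ v, f (c • v) = ENNReal.ofReal c * f v) :
    ∫⁻ x in frontier K, f (gaussMap K x) ∂μHE[m - 1] = m * ∫⁻ y in K, f (∇ (gauge K) y) := by
  have hG := measurable_gradient (gauge K)
  calc ∫⁻ x in frontier K, f (gaussMap K x) ∂μHE[m - 1]
      = ∫⁻ x in frontier K, ‖∇ (gauge K) x‖ₑ⁻¹ * f (∇ (gauge K) x) ∂μHE[m - 1] := by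
        have hreg := hK.ae_mem_regularFrontier
        rw [finrank_euclideanSpace_fin] at hreg
        refine lintegral_congr_ae ?_
        filter_upwards [hreg] with x hx
        have hpos := norm_pos_iff.2 (hK.gradient_gauge_ne_zero hx.1 hx.2)
        rw [hK.gaussMap_eq_inv_norm_smul_gradient hx, hfc _ (inv_pos.2 hpos),
          ENNReal.ofReal_inv_of_pos hpos, ofReal_norm]
    _ = ∫⁻ x, f (∇ (gauge K) x) ∂coneMeasure K := by
        rw [← hK.withDensity_enorm_gradient_gauge_inv, finrank_euclideanSpace_fin]
        exact (lintegral_withDensity_eq_lintegral_mul _ hG.enorm.inv (hf.comp hG)).symm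
    _ = m * ∫⁻ y in K, f (∇ (gauge K) (radialProj K y)) := by
        rw [coneMeasure, finrank_euclideanSpace_fin, lintegral_smul_measure, smul_eq_mul]
        exact congrArg _ (lintegral_map (hf.comp hG) hK.measurable_radialProj)
    _ = m * ∫⁻ y in K, f (∇ (gauge K) y) := by
        refine congrArg _ (lintegral_congr_ae (ae_restrict_of_ae ?_))
        filter_upwards [Measure.ae_ne volume (0 : Euc m)] with y hy
        rw [radialProj, gradient_smul_of_homogeneous (gauge_smul_of_pos K)
          (inv_pos.2 (hK.gauge_pos hy))]

end IsCenteredBody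

theorem exists_hausdorffMeasure_eq_smul {X : Type*} [EMetricSpace X] [MeasurableSpace X]
    [BorelSpace X] (d : ℕ) :
    ∃ c : ℝ≥0∞, c ≠ 0 ∧ c ≠ ∞ ∧ (μH[(d : ℝ)] : Measure X) = c • μHE[d] := by
  have hne := Measure.addHaarScalarFactor_volume_hausdorffMeasure_ne_zero d
  rw [Measure.euclideanHausdorffMeasure_def]
  refine ⟨_, ENNReal.coe_ne_zero.2 (inv_ne_zero hne), ENNReal.coe_ne_top, ?_⟩
  rw [← ENNReal.smul_def, smul_smul, inv_mul_cancel₀ hne, one_smul]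

theorem exists_lintegral_surfMeasure_eq (hm : 1 ≤ m) :
    ∃ c : ℝ≥0∞, c ≠ 0 ∧ c ≠ ∞ ∧ ∀ K : Set (Euc m), IsCenteredBody K → ∀ f : Euc m → ℝ≥0∞,
      Measurable f → (∀ c : ℝ, 0 < c → ∀ v, f (c • v) = ENNReal.ofReal c * f v) →
      ∫⁻ v, f v ∂surfMeasure K = c * ∫⁻ y in K, f (∇ (gauge K) y) := by
  have : Nonempty (Fin m) := ⟨⟨0, hm⟩⟩
  obtain ⟨c, hc0, hc, hμ⟩ := exists_hausdorffMeasure_eq_smul (X := Euc m) (m - 1)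
  rw [Nat.cast_sub hm, Nat.cast_one] at hμ
  refine ⟨c * m, mul_ne_zero hc0 (by exact_mod_cast (zero_lt_one.trans_le hm).ne'),
    ENNReal.mul_ne_top hc (ENNReal.natCast_ne_top m), fun K hK f hf hfc => ?_⟩
  have hG := measurable_gradient (gauge K)
  have hgauss : AEMeasurable (gaussMap K) (μHE[m - 1].restrict (frontier K)) := by
    have hreg := hK.ae_mem_regularFrontier
    rw [finrank_euclideanSpace_fin] at hreg
    refine ⟨_, hG.norm.inv.smul hG, ?_⟩
    filter_upwards [hreg] with x hx using hK.gaussMap_eq_inv_norm_smul_gradient hx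
  rw [surfMeasure, hμ, Measure.restrict_smul, Measure.map_smul, lintegral_smul_measure,
    smul_eq_mul, lintegral_map' hf.aemeasurable hgauss,
    hK.lintegral_frontier_comp_gaussMap hf hfc, mul_assoc]

end SurfaceMeasure

section BrunnMinkowski

theorem volume_add_volume_le_volume_add_of_isCompact {A B : Set ℝ} (hA : IsCompact A)
    (hB : IsCompact B) (hA0 : A.Nonempty) (hB0 : B.Nonempty) :
    volume A + volume B ≤ volume (A + B) := by
  obtain ⟨a, ha, hamax⟩ := hA.exists_isGreatest hA0
  obtain ⟨b, hb, hbmin⟩ := hB.exists_isLeast hB0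
  have hdisj : AEDisjoint volume (A + {b}) ({a} + B) := by
    refine measure_mono_null (t := {a + b}) ?_ (measure_singleton _)
    rintro _ ⟨⟨x, hx, _, rfl, rfl⟩, ⟨_, rfl, y, hy, hxy⟩⟩
    have hxa := hamax hx
    have hby := hbmin hy
    simp only at hxy
    exact mem_singleton_iff.2 (by linarith)
  have hmeas : MeasurableSet ({a} + B) := (isCompact_singleton.add hB).measurableSet
  calc volume A + volume B = volume (A + {b}) + volume ({a} + B) := by
        simp [singleton_add, add_singleton, image_add_left, image_add_right]
    _ = volume ((A + {b}) ∪ ({a} + B)) := (measure_union₀ hmeas.nullMeasurableSet hdisj).symm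
    _ ≤ volume (A + B) := measure_mono (union_subset
        (add_subset_add_left (singleton_subset_iff.2 hb))
        (add_subset_add_right (singleton_subset_iff.2 ha)))

theorem volume_add_volume_le_volume_add {A B : Set ℝ} (hA : MeasurableSet A)
    (hB : MeasurableSet B) (hA0 : A.Nonempty) (hB0 : B.Nonempty) :
    volume A + volume B ≤ volume (A + B) := by
  obtain ⟨x, hx⟩ := hA0
  obtain ⟨y, hy⟩ := hB0
  have hle : ∀ C ⊆ A, IsCompact C → ∀ D ⊆ B, IsCompact D →
      volume C + volume D ≤ volume (A + B) := fun C hCA hC D hDB hD =>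
    calc volume C + volume D ≤ volume (insert x C) + volume (insert y D) := by
          gcongr <;> exact subset_insert _ _
      _ ≤ volume (insert x C + insert y D) := volume_add_volume_le_volume_add_of_isCompact
          (hC.insert x) (hD.insert y) (insert_nonempty _ _) (insert_nonempty _ _)
      _ ≤ volume (A + B) := by
          gcongr
          exacts [insert_subset hx hCA, insert_subset hy hDB]
  rw [hA.measure_eq_iSup_isCompact volume, hB.measure_eq_iSup_isCompact volume]
  simp only [iSup_and']
  exact ENNReal.biSup_add_biSup_le' (p := fun C => C ⊆ A ∧ IsCompact C)
    (q := fun D => D ⊆ B ∧ IsCompact D) ⟨∅, empty_subset A, isCompact_empty⟩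
    ⟨∅, empty_subset B, isCompact_empty⟩ fun C hC D hD => hle C hC.1 hC.2 D hD.1 hD.2

theorem lintegral_eq_lintegral_Ioo_meas_lt {α : Type*} [MeasurableSpace α] (μ : Measure α)
    {f : α → ℝ≥0∞} (hf : Measurable f) (hf1 : ∀ x, f x ≤ 1) :
    ∫⁻ x, f x ∂μ = ∫⁻ t in Ioo (0 : ℝ) 1, μ {x | ENNReal.ofReal t < f x} := by
  have hfin : ∀ x, f x ≠ ∞ := fun x => ne_top_of_le_ne_top ENNReal.one_ne_top (hf1 x)
  have hcake := lintegral_eq_lintegral_meas_lt μ (f := fun x => (f x).toReal)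
    (.of_forall fun x => ENNReal.toReal_nonneg) hf.ennreal_toReal.aemeasurable
  simp only [ENNReal.ofReal_toReal (hfin _)] at hcake
  have hsupp : (fun t => μ {x | t < (f x).toReal}).support ⊆ Iio 1 := fun t ht => by
    obtain ⟨x, hx⟩ := nonempty_of_measure_ne_zero ht
    exact hx.trans_le (ENNReal.toReal_mono ENNReal.one_ne_top (hf1 x))
  rw [hcake, ← setLIntegral_eq_of_support_subset hsupp, Measure.restrict_restrict measurableSet_Iio,
    Iio_inter_Ioi]
  refine setLIntegral_congr_fun measurableSet_Ioo fun t ht => ?_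
  simp only [ENNReal.ofReal_lt_iff_lt_toReal ht.1.le (hfin _)]

theorem lintegral_eq_iSup_lintegral_min_natCast {α : Type*} [MeasurableSpace α] (μ : Measure α)
    {f : α → ℝ≥0∞} (hf : Measurable f) :
    ∫⁻ x, f x ∂μ = ⨆ n : ℕ, ∫⁻ x, min (f x) n ∂μ := by
  rw [← lintegral_iSup (fun n => hf.min measurable_const)
    fun i j hij x => min_le_min le_rfl (by exact_mod_cast hij)]
  refine lintegral_congr fun x => ?_
  rw [← inf_iSup_eq, ENNReal.iSup_natCast, inf_top_eq]

section Weights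

variable {a b : ℝ} (ha : 0 < a) (hb : 0 < b) (hab : a + b = 1)

include ha hb hab

theorem rpow_mul_rpow_le_mul_add_mul (p q : ℝ≥0∞) :
    p ^ a * q ^ b ≤ ENNReal.ofReal a * p + ENNReal.ofReal b * q := by
  have hconj : a⁻¹.HolderConjugate b⁻¹ :=
    Real.holderConjugate_iff.2 ⟨(one_lt_inv₀ ha).2 (by linarith), by rwa [inv_inv, inv_inv]⟩
  have hyoung := ENNReal.young_inequality (p ^ a) (q ^ b) hconj
  rwa [ENNReal.rpow_rpow_inv ha.ne', ENNReal.rpow_rpow_inv hb.ne', ENNReal.ofReal_inv_of_pos ha,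
    ENNReal.ofReal_inv_of_pos hb, div_eq_mul_inv, div_eq_mul_inv, inv_inv, inv_inv, mul_comm p,
    mul_comm q] at hyoung

section OneDimensional

variable {f g h : ℝ → ℝ≥0∞} (hf : Measurable f) (hg : Measurable g) (hh : Measurable h)
  (hfgh : ∀ x y, f x ^ a * g y ^ b ≤ h (a * x + b * y))

include hf hg hfgh

theorem volume_lt_add_volume_lt_le_volume_lt {t : ℝ≥0∞} (hft : ∃ x, t < f x) (hgt : ∃ y, t < g y) :
    ENNReal.ofReal a * volume {x | t < f x} + ENNReal.ofReal b * volume {y | t < g y} ≤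
      volume {z | t < h z} := by
  have hsub : a • {x | t < f x} + b • {y | t < g y} ⊆ {z | t < h z} := by
    rintro _ ⟨_, ⟨x, hx, rfl⟩, _, ⟨y, hy, rfl⟩, rfl⟩
    refine lt_of_lt_of_le ?_ (hfgh x y)
    calc t = t ^ a * t ^ b := by
          rw [← ENNReal.rpow_add_of_nonneg _ _ ha.le hb.le, hab, ENNReal.rpow_one]
      _ < f x ^ a * g y ^ b :=
          ENNReal.mul_lt_mul (ENNReal.rpow_lt_rpow hx ha) (ENNReal.rpow_lt_rpow hy hb)
  calc _ = volume (a • {x | t < f x}) + volume (b • {y | t < g y}) := by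
        simp [Measure.addHaar_smul, abs_of_pos ha, abs_of_pos hb]
    _ ≤ volume (a • {x | t < f x} + b • {y | t < g y}) := volume_add_volume_le_volume_add
        ((measurableSet_lt measurable_const hf).const_smul₀ a)
        ((measurableSet_lt measurable_const hg).const_smul₀ b)
        (Nonempty.smul_set hft) (Nonempty.smul_set hgt)
    _ ≤ volume {z | t < h z} := measure_mono hsub

include hh

theorem lintegral_add_lintegral_le_of_iSup_eq_one (hf1 : ⨆ x, f x = 1) (hg1 : ⨆ x, g x = 1)
    (hh1 : ∀ x, h x ≤ 1) :
    ENNReal.ofReal a * (∫⁻ x, f x) + ENNReal.ofReal b * (∫⁻ x, g x) ≤ ∫⁻ x, h x := by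
  have hmeas : Measurable fun t : ℝ => volume {x | ENNReal.ofReal t < f x} :=
    Antitone.measurable fun s t hst => measure_mono fun x hx =>
      (ENNReal.ofReal_le_ofReal hst).trans_lt hx
  rw [lintegral_eq_lintegral_Ioo_meas_lt _ hf fun x => hf1 ▸ le_iSup f x,
    lintegral_eq_lintegral_Ioo_meas_lt _ hg fun x => hg1 ▸ le_iSup g x,
    lintegral_eq_lintegral_Ioo_meas_lt _ hh hh1, ← lintegral_const_mul' _ _ ENNReal.ofReal_ne_top,
    ← lintegral_const_mul' _ _ ENNReal.ofReal_ne_top, ← lintegral_add_left (hmeas.const_mul _)]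
  refine setLIntegral_mono' measurableSet_Ioo fun t ht => ?_
  have hlt : ENNReal.ofReal t < 1 := ENNReal.ofReal_lt_one.2 ht.2
  exact volume_lt_add_volume_lt_le_volume_lt ha hb hab hf hg hfgh
    (lt_iSup_iff.1 (hlt.trans_eq hf1.symm)) (lt_iSup_iff.1 (hlt.trans_eq hg1.symm))

theorem prekopa_leindler_real_of_bounded (hf1 : ⨆ x, f x ≠ ∞) (hg1 : ⨆ x, g x ≠ ∞) :
    (∫⁻ x, f x) ^ a * (∫⁻ x, g x) ^ b ≤ ∫⁻ x, h x := by
  set α := ⨆ x, f x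
  set β := ⨆ x, g x
  rcases eq_or_ne α 0 with hα | hα
  · simp [show f = 0 from funext (ENNReal.iSup_eq_zero.1 hα), ha]
  rcases eq_or_ne β 0 with hβ | hβ
  · simp [show g = 0 from funext (ENNReal.iSup_eq_zero.1 hβ), hb]
  set γ := α ^ a * β ^ b
  have hγ0 : γ ≠ 0 := mul_ne_zero (by simp [hα, hf1]) (by simp [hβ, hg1])
  have hγ : γ ≠ ∞ := ENNReal.mul_ne_top (by simp [hf1, ha.le]) (by simp [hg1, hb.le])
  have hscale : ∀ p q : ℝ≥0∞, (α⁻¹ * p) ^ a * (β⁻¹ * q) ^ b = γ⁻¹ * (p ^ a * q ^ b) := by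
    intro p q
    rw [ENNReal.mul_rpow_of_nonneg _ _ ha.le, ENNReal.mul_rpow_of_nonneg _ _ hb.le,
      mul_mul_mul_comm, ENNReal.inv_rpow, ENNReal.inv_rpow,
      ← ENNReal.mul_inv (.inr (by simp [hg1, hb.le])) (.inl (by simp [hf1, ha.le]))]
  have hnormalized : ∀ x y, (α⁻¹ * f x) ^ a * (β⁻¹ * g y) ^ b ≤
      min (γ⁻¹ * h (a * x + b * y)) 1 := by
    intro x y
    rw [hscale]
    refine le_min (by gcongr; exact hfgh x y) ?_
    rw [ENNReal.inv_mul_le_iff hγ0 hγ, mul_one]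
    exact mul_le_mul' (by gcongr; exact le_iSup f x) (by gcongr; exact le_iSup g y)
  have hmean := lintegral_add_lintegral_le_of_iSup_eq_one ha hb hab (hf.const_mul α⁻¹)
    (hg.const_mul β⁻¹) (h := fun z => min (γ⁻¹ * h z) 1) ((hh.const_mul _).min measurable_const)
    hnormalized (by rw [← ENNReal.mul_iSup, ENNReal.inv_mul_cancel hα hf1])
    (by rw [← ENNReal.mul_iSup, ENNReal.inv_mul_cancel hβ hg1]) fun z => min_le_right _ _
  rw [lintegral_const_mul _ hf, lintegral_const_mul _ hg] at hmean
  have hle : γ⁻¹ * ((∫⁻ x, f x) ^ a * (∫⁻ x, g x) ^ b) ≤ γ⁻¹ * ∫⁻ x, h x :=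
    calc _ ≤ ∫⁻ z, min (γ⁻¹ * h z) 1 :=
          (hscale _ _).symm.trans_le ((rpow_mul_rpow_le_mul_add_mul ha hb hab _ _).trans hmean)
      _ ≤ ∫⁻ z, γ⁻¹ * h z := lintegral_mono fun z => min_le_left _ _
      _ = γ⁻¹ * ∫⁻ z, h z := lintegral_const_mul _ hh
  exact (ENNReal.mul_le_mul_iff_right (ENNReal.inv_ne_zero.2 hγ) (ENNReal.inv_ne_top.2 hγ0)).1 hle

theorem prekopa_leindler_real : (∫⁻ x, f x) ^ a * (∫⁻ x, g x) ^ b ≤ ∫⁻ x, h x := by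
  have hiSup : ∀ {c : ℝ}, 0 < c → ∀ u : ℕ → ℝ≥0∞, (⨆ n, u n) ^ c = ⨆ n, u n ^ c :=
    fun hc u => (ENNReal.orderIsoRpow _ hc).map_iSup u
  rw [lintegral_eq_iSup_lintegral_min_natCast _ hf, lintegral_eq_iSup_lintegral_min_natCast _ hg,
    hiSup ha, hiSup hb, ENNReal.iSup_mul]
  refine iSup_le fun n => ?_
  rw [ENNReal.mul_iSup]
  refine iSup_le fun k => ?_
  refine prekopa_leindler_real_of_bounded ha hb hab (hf.min measurable_const)
    (hg.min measurable_const) hh (fun x y => le_trans ?_ (hfgh x y)) ?_ ?_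
  · gcongr <;> exact min_le_left _ _
  · exact ne_top_of_le_ne_top (ENNReal.natCast_ne_top n) (iSup_le fun x => min_le_right _ _)
  · exact ne_top_of_le_ne_top (ENNReal.natCast_ne_top k) (iSup_le fun x => min_le_right _ _)

end OneDimensional

end Weights

theorem measurable_fin_cons {n : ℕ} :
    Measurable fun p : ℝ × (Fin n → ℝ) => (Fin.cons p.1 p.2 : Fin (n + 1) → ℝ) := by
  simpa [Fin.consEquiv] using
    (MeasurableEquiv.piFinSuccAbove (fun _ : Fin (n + 1) => ℝ) 0).symm.measurable

theorem lintegral_eq_lintegral_lintegral_fin_cons {n : ℕ} {f : (Fin (n + 1) → ℝ) → ℝ≥0∞}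
    (hf : Measurable f) :
    ∫⁻ x, f x = ∫⁻ s : ℝ, ∫⁻ z : Fin n → ℝ, f (Fin.cons s z) := by
  rw [← (volume_preserving_piFinSuccAbove (fun _ : Fin (n + 1) => ℝ) 0).symm.lintegral_comp hf,
    Measure.volume_eq_prod,
    lintegral_prod (fun p => f (MeasurableEquiv.symm _ p))
      (hf.comp (MeasurableEquiv.measurable _)).aemeasurable]
  simp [Fin.consEquiv]

theorem prekopa_leindler {n : ℕ} {a b : ℝ} (ha : 0 < a) (hb : 0 < b) (hab : a + b = 1)
    {f g h : (Fin n → ℝ) → ℝ≥0∞} (hf : Measurable f) (hg : Measurable g) (hh : Measurable h)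
    (hfgh : ∀ x y, f x ^ a * g y ^ b ≤ h (a • x + b • y)) :
    (∫⁻ x, f x) ^ a * (∫⁻ x, g x) ^ b ≤ ∫⁻ x, h x := by
  induction n with
  | zero =>
    simp only [volume_pi, Measure.pi_of_empty _ (0 : Fin 0 → ℝ), lintegral_dirac]
    simpa using hfgh 0 0
  | succ n ih =>
    have hcons : ∀ {u : (Fin (n + 1) → ℝ) → ℝ≥0∞}, Measurable u →
        Measurable fun p : ℝ × (Fin n → ℝ) => u (Fin.cons p.1 p.2) :=
      fun hu => hu.comp measurable_fin_cons
    rw [lintegral_eq_lintegral_lintegral_fin_cons hf, lintegral_eq_lintegral_lintegral_fin_cons hg,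
      lintegral_eq_lintegral_lintegral_fin_cons hh]
    refine prekopa_leindler_real ha hb hab (hcons hf).lintegral_prod_right'
      (hcons hg).lintegral_prod_right' (hcons hh).lintegral_prod_right' fun s t => ?_
    refine ih ((hcons hf).comp measurable_prodMk_left) ((hcons hg).comp measurable_prodMk_left)
      ((hcons hh).comp measurable_prodMk_left) fun x y => ?_
    convert hfgh (Fin.cons s x) (Fin.cons t y) using 2
    ext i
    refine Fin.cases ?_ (fun j => ?_) i <;> simp

section InnerProductSpace

variable {E : Type*} [NormedAddCommGroup E] [InnerProductSpace ℝ E] [FiniteDimensional ℝ E]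
  [MeasurableSpace E] [BorelSpace E]

theorem volume_rpow_mul_volume_rpow_le {a b : ℝ} (ha : 0 < a) (hb : 0 < b) (hab : a + b = 1)
    {K L : Set E} (hK : IsCompact K) (hL : IsCompact L) :
    volume K ^ a * volume L ^ b ≤ volume (a • K + b • L) := by
  let φ : (Fin (finrank ℝ E) → ℝ) → E := fun x => (stdOrthonormalBasis ℝ E).repr.symm (.toLp 2 x)
  have hφ : MeasurePreserving φ := (stdOrthonormalBasis ℝ E).measurePreserving_repr_symm.comp
    (PiLp.volume_preserving_toLp _)
  have hφ_lin : ∀ x y, φ (a • x + b • y) = a • φ x + b • φ y := by simp [φ]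
  have hmeas : ∀ {S : Set E}, IsCompact S →
      Measurable ((φ ⁻¹' S).indicator fun _ => (1 : ℝ≥0∞)) := fun hS =>
    measurable_const.indicator (hφ.measurable hS.measurableSet)
  have hvol : ∀ {S : Set E}, IsCompact S →
      volume S = ∫⁻ x, (φ ⁻¹' S).indicator (fun _ => (1 : ℝ≥0∞)) x := fun hS => by
    rw [lintegral_indicator_const (hφ.measurable hS.measurableSet), one_mul,
      hφ.measure_preimage hS.nullMeasurableSet]
  have hKL : IsCompact (a • K + b • L) := (hK.smul a).add (hL.smul b)
  rw [hvol hK, hvol hL, hvol hKL]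
  refine prekopa_leindler ha hb hab (hmeas hK) (hmeas hL) (hmeas hKL) fun x y => ?_
  by_cases hx : φ x ∈ K
  · by_cases hy : φ y ∈ L
    · have : a • φ x + b • φ y ∈ a • K + b • L :=
        add_mem_add (smul_mem_smul_set hx) (smul_mem_smul_set hy)
      simp [hx, hy, hφ_lin, this]
    · simp [hy, hb]
  · simp [hx, ha]

theorem volume_le_volume_add {K L : Set E} (hK : K.Nonempty) : volume L ≤ volume (K + L) := by
  obtain ⟨x, hx⟩ := hK
  rw [← measure_vadd volume x L]
  exact measure_mono (vadd_set_subset_add hx)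

variable [Nontrivial E]

theorem volume_rpow_inv_finrank_smul {c : ℝ} (hc : 0 ≤ c) (K : Set E) :
    volume (c • K) ^ (finrank ℝ E : ℝ)⁻¹ = ENNReal.ofReal c * volume K ^ (finrank ℝ E : ℝ)⁻¹ := by
  rw [Measure.addHaar_smul_of_nonneg _ hc, ENNReal.mul_rpow_of_nonneg _ _ (by positivity),
    ENNReal.ofReal_pow hc, ENNReal.pow_rpow_inv_natCast Module.finrank_pos.ne']

theorem exists_rpow_inv_finrank_eq_and_volume_inv_smul_eq_one {K : Set E} (hK : IsCompact K)
    (hK0 : volume K ≠ 0) :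
    ∃ k : ℝ, 0 < k ∧ volume K ^ (finrank ℝ E : ℝ)⁻¹ = ENNReal.ofReal k ∧
      volume (k⁻¹ • K) = 1 := by
  have hd : 0 < (finrank ℝ E : ℝ)⁻¹ := by simp [Module.finrank_pos]
  have hfin := ENNReal.rpow_ne_top_of_nonneg hd.le (hK.measure_ne_top (μ := volume))
  have hk : 0 < (volume K ^ (finrank ℝ E : ℝ)⁻¹).toReal :=
    ENNReal.toReal_pos (by simp [hK0, hK.measure_ne_top]) hfin
  have hKk := (ENNReal.ofReal_toReal hfin).symm
  refine ⟨_, hk, hKk, ENNReal.rpow_left_injective hd.ne' ?_⟩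
  simp only
  rw [volume_rpow_inv_finrank_smul (by positivity), ENNReal.one_rpow]
  nth_rw 2 [hKk]
  rw [← ENNReal.ofReal_mul (by positivity), inv_mul_cancel₀ hk.ne', ENNReal.ofReal_one]

theorem brunn_minkowski {K L : Set E} (hK : IsCompact K) (hL : IsCompact L)
    (hK0 : K.Nonempty) (hL0 : L.Nonempty) :
    volume K ^ (finrank ℝ E : ℝ)⁻¹ + volume L ^ (finrank ℝ E : ℝ)⁻¹ ≤
      volume (K + L) ^ (finrank ℝ E : ℝ)⁻¹ := by
  have hd : 0 < (finrank ℝ E : ℝ)⁻¹ := by simp [Module.finrank_pos]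
  rcases eq_or_ne (volume K) 0 with hvK | hvK
  · simpa [hvK, hd] using ENNReal.rpow_le_rpow (volume_le_volume_add hK0) hd.le
  rcases eq_or_ne (volume L) 0 with hvL | hvL
  · simpa [hvL, hd, add_comm L] using ENNReal.rpow_le_rpow (volume_le_volume_add hL0) hd.le
  obtain ⟨k, hk, hKk, hK1⟩ := exists_rpow_inv_finrank_eq_and_volume_inv_smul_eq_one hK hvK
  obtain ⟨l, hl, hLl, hL1⟩ := exists_rpow_inv_finrank_eq_and_volume_inv_smul_eq_one hL hvL
  have hscale : K + L = (k + l) • ((k / (k + l)) • (k⁻¹ • K) + (l / (k + l)) • (l⁻¹ • L)) := by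
    have : (k + l) * (k / (k + l) * k⁻¹) = 1 := by field_simp
    have : (k + l) * (l / (k + l) * l⁻¹) = 1 := by field_simp
    simp [smul_add, smul_smul, *]
  have hone : 1 ≤ volume ((k / (k + l)) • (k⁻¹ • K) + (l / (k + l)) • (l⁻¹ • L)) := by
    simpa [hK1, hL1] using volume_rpow_mul_volume_rpow_le (a := k / (k + l)) (b := l / (k + l))
      (by positivity) (by positivity) (by field_simp) (hK.smul k⁻¹) (hL.smul l⁻¹)
  rw [hKk, hLl, ← ENNReal.ofReal_add hk.le hl.le, hscale,
    volume_rpow_inv_finrank_smul (by positivity)]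
  exact le_mul_of_one_le_right' (ENNReal.one_le_rpow hone hd)

end InnerProductSpace

end BrunnMinkowski

section MixedVolume

theorem one_add_pow_le_one_add_mul_pow {x θ : ℝ} (hx : 0 ≤ x) (hxθ : 1 + x ≤ θ) (n : ℕ) :
    (1 + x) ^ n ≤ 1 + n * x * θ ^ (n - 1) := by
  have hbernoulli : (1 + x) ^ n + n * (1 + x) ^ (n - 1) * -x ≤ (1 + x + -x) ^ n :=
    pow_add_mul_le_add_pow (by positivity) (by linarith) n
  have : n * x * (1 + x) ^ (n - 1) ≤ n * x * θ ^ (n - 1) := by gcongr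
  rw [add_neg_cancel_right, one_pow] at hbernoulli
  linarith

variable {E : Type*} [NormedAddCommGroup E] [InnerProductSpace ℝ E]

/-- The support function `h_L` of a set `L`, meaningful for `L` nonempty and bounded. -/
def supportFun (L : Set E) (u : E) : ℝ :=
  sSup ((fun x => ⟪u, x⟫) '' L)

variable {K L : Set E}

theorem continuous_supportFun (hL : IsCompact L) : Continuous (supportFun L) :=
  hL.continuous_sSup (f := fun u x => ⟪u, x⟫) (by fun_prop)

theorem inner_le_supportFun (hL : IsCompact L) (u : E) {x : E} (hx : x ∈ L) :
    ⟪u, x⟫ ≤ supportFun L u :=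
  le_csSup (hL.image (by fun_prop)).bddAbove ⟨x, hx, rfl⟩

theorem supportFun_nonneg (hL : IsCompact L) (hL0 : 0 ∈ L) (u : E) : 0 ≤ supportFun L u := by
  simpa using inner_le_supportFun hL u hL0

theorem supportFun_le (hL : L.Nonempty) {u : E} {a : ℝ} (h : ∀ x ∈ L, ⟪u, x⟫ ≤ a) :
    supportFun L u ≤ a :=
  csSup_le (hL.image _) (forall_mem_image.2 h)

theorem supportFun_smul (L : Set E) {c : ℝ} (hc : 0 ≤ c) (u : E) :
    supportFun L (c • u) = c * supportFun L u := by
  have : (fun x => ⟪c • u, x⟫) '' L = c • ((fun x => ⟪u, x⟫) '' L) := by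
    simp only [← image_smul, image_image, real_inner_smul_left, smul_eq_mul]
  rw [supportFun, this, Real.sSup_smul_of_nonneg hc, smul_eq_mul, supportFun]

variable [FiniteDimensional ℝ E]

theorem IsCenteredBody.supportFun_gradient_gauge_le (hK : IsCenteredBody K) (hL : L.Nonempty)
    {a : ℝ} (ha : ∀ z ∈ L, gauge K z ≤ a) (y : E) : supportFun L (∇ (gauge K) y) ≤ a :=
  supportFun_le hL fun z hz => (hK.inner_gradient_gauge_le y z).trans (ha z hz)

variable [MeasurableSpace E] [BorelSpace E]

/-- The mixed volume `V₁(K, L) = (1 / dim E) ∫ h_L dS_K` for `L` containing the origin. The surface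
integral is written as a volume integral in polar coordinates: `∇ (gauge K) y` is the outward
normal of `K` at the boundary point on the ray through `y`, normalized so that the tangent
hyperplane is at height `1`. -/
def mixedVolume (K L : Set E) : ℝ≥0∞ :=
  ∫⁻ y in K, ENNReal.ofReal (supportFun L (∇ (gauge K) y))

namespace IsCenteredBody

theorem mixedVolume_self_le (hK : IsCenteredBody K) : mixedVolume K K ≤ volume K := by
  have hle := hK.supportFun_gradient_gauge_le ⟨0, interior_subset hK.zero_mem_interior⟩
    fun z hz => hK.gauge_le_one_iff.2 hz
  calc mixedVolume K K ≤ ∫⁻ _ in K, 1 :=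
        lintegral_mono fun y => ENNReal.ofReal_le_one.2 (hle y)
    _ = volume K := setLIntegral_one K

section Radial

variable {ρ : E → ℝ} (hρs : ∀ c : ℝ, 0 < c → ∀ y, ρ (c • y) = ρ y)

include hρs

theorem volume_gauge_le_inter_Ico_le (hK : IsCenteredBody K) (hρ : Measurable ρ) {r : ℝ}
    {θ : ℝ≥0} (hr : 0 < r) (hθ : 0 < θ) :
    volume ({y | gauge K y ≤ ρ y} ∩ ρ ⁻¹' Ico r (θ * r)) ≤
      θ ^ finrank ℝ E *
        ∫⁻ y in K ∩ ρ ⁻¹' Ico r (θ * r), ENNReal.ofReal (ρ y ^ finrank ℝ E) := by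
  have hpos : 0 < θ * r := mul_pos hθ hr
  calc volume ({y | gauge K y ≤ ρ y} ∩ ρ ⁻¹' Ico r (θ * r))
      ≤ volume ((θ * r) • (K ∩ ρ ⁻¹' Ico r (θ * r))) := by
        refine measure_mono fun y ⟨hy, hyI⟩ => ?_
        rw [mem_smul_set_iff_inv_smul_mem₀ hpos.ne']
        refine ⟨hK.gauge_le_one_iff.1 ?_, by rwa [mem_preimage, hρs _ (inv_pos.2 hpos)]⟩
        rw [gauge_smul_of_pos K _ (inv_pos.2 hpos), inv_mul_le_one₀ hpos]
        exact hy.trans hyI.2.le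
    _ = θ ^ finrank ℝ E *
          ∫⁻ _ in K ∩ ρ ⁻¹' Ico r (θ * r), ENNReal.ofReal (r ^ finrank ℝ E) := by
        rw [Measure.addHaar_smul_of_nonneg _ hpos.le, setLIntegral_const, ← mul_assoc, mul_pow,
          ENNReal.ofReal_mul (by positivity), ENNReal.ofReal_pow (by positivity),
          ENNReal.ofReal_coe_nnreal]
    _ ≤ _ := by
        gcongr 1
        refine setLIntegral_mono' (hK.isCompact.measurableSet.inter (hρ measurableSet_Ico))
          fun y hy => ?_
        gcongr
        exact hy.2.1

theorem volume_gauge_le_le (hK : IsCenteredBody K) (hρ : Measurable ρ) (hρ0 : ∀ y, 0 < ρ y) :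
    volume {y | gauge K y ≤ ρ y} ≤ ∫⁻ y in K, ENNReal.ofReal (ρ y ^ finrank ℝ E) := by
  refine le_of_forall_one_lt_le_pow_mul (finrank ℝ E) fun θ hθ => ?_
  have hθ' : (1 : ℝ) < θ := hθ
  have hθ0 : 0 < θ := zero_lt_one.trans hθ
  have hsucc : ∀ n : ℤ, (θ : ℝ) ^ (n + 1) = θ * θ ^ n := fun n => by
    rw [zpow_add_one₀ (by positivity), mul_comm]
  set s : ℤ → Set E := fun n => ρ ⁻¹' Ico ((θ : ℝ) ^ n) (θ * (θ : ℝ) ^ n)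
  have hs : ∀ n, MeasurableSet (K ∩ s n) := fun n =>
    hK.isCompact.measurableSet.inter (hρ measurableSet_Ico)
  have hcover : ⋃ n, s n = univ := eq_univ_of_forall fun y => by
    obtain ⟨n, hn⟩ := exists_mem_Ico_zpow (hρ0 y) hθ'
    exact mem_iUnion.2 ⟨n, by rwa [hsucc] at hn⟩
  have hdisj : Pairwise (Function.onFun Disjoint fun n => K ∩ s n) := fun i j hij => by
    have := (zpow_right_mono₀ hθ'.le).pairwise_disjoint_on_Ico_succ hij
    simp only [Function.onFun, Order.succ_eq_add_one, hsucc] at this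
    exact (this.preimage ρ).mono inter_subset_right inter_subset_right
  calc volume {y | gauge K y ≤ ρ y} ≤ ∑' n, volume ({y | gauge K y ≤ ρ y} ∩ s n) := by
        conv_lhs => rw [← inter_univ {y | gauge K y ≤ ρ y}, ← hcover, inter_iUnion]
        exact measure_iUnion_le _
    _ ≤ ∑' n, (θ : ℝ≥0∞) ^ finrank ℝ E * ∫⁻ y in K ∩ s n, ENNReal.ofReal (ρ y ^ finrank ℝ E) :=
        ENNReal.tsum_le_tsum fun n =>
          hK.volume_gauge_le_inter_Ico_le hρs hρ (by positivity) hθ0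
    _ = θ ^ finrank ℝ E * ∫⁻ y in K, ENNReal.ofReal (ρ y ^ finrank ℝ E) := by
        rw [ENNReal.tsum_mul_left, ← lintegral_iUnion hs hdisj, ← inter_iUnion, hcover, inter_univ]

end Radial

theorem volume_add_smul_le (hK : IsCenteredBody K) (hL : IsCompact L) (hL0 : 0 ∈ L) {ε : ℝ}
    (hε : 0 ≤ ε) : volume (K + ε • L) ≤
      ∫⁻ y in K, ENNReal.ofReal ((1 + ε * supportFun L (∇ (gauge K) y)) ^ finrank ℝ E) := by
  have hmeas : Measurable fun y => 1 + ε * supportFun L (∇ (gauge K) y) :=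
    (((continuous_supportFun hL).measurable.comp (measurable_gradient _)).const_mul ε).const_add 1
  refine (measure_mono_ae ?_).trans (hK.volume_gauge_le_le (fun c hc y => ?_) hmeas fun y => ?_)
  · filter_upwards [hK.ae_differentiableAt_gauge] with y hd hy
    obtain ⟨k, hk, _, ⟨l, hl, rfl⟩, rfl⟩ := hy
    have hself : ⟪∇ (gauge K) (k + ε • l), k + ε • l⟫ = gauge K (k + ε • l) :=
      hK.inner_gradient_gauge_self hd
    rw [inner_add_right, inner_smul_right] at hself
    refine hself.symm.trans_le ?_
    gcongr
    · exact (hK.inner_gradient_gauge_le _ k).trans (hK.gauge_le_one_iff.2 hk)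
    · exact inner_le_supportFun hL _ hl
  · simp only [gradient_smul_of_homogeneous (gauge_smul_of_pos K) hc y]
  · have := supportFun_nonneg hL hL0 (∇ (gauge K) y)
    positivity

theorem exists_volume_add_smul_le (hK : IsCenteredBody K) (hL : IsCompact L) (hL0 : 0 ∈ L)
    {θ : ℝ≥0} (hθ : 1 < θ) : ∃ ε : ℝ≥0, 0 < ε ∧ volume (K + (ε : ℝ) • L) ≤
      volume K + finrank ℝ E * ε * (θ ^ (finrank ℝ E - 1) * mixedVolume K L) := by
  obtain ⟨B, hB⟩ := (hL.image hK.continuous_gauge).bddAbove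
  have hhB := hK.supportFun_gradient_gauge_le (a := max B 1) ⟨0, hL0⟩
    fun z hz => le_max_of_le_left (hB ⟨z, hz, rfl⟩)
  have hh0 := fun y => supportFun_nonneg hL hL0 (∇ (gauge K) y)
  obtain ⟨ε, hε, hεB⟩ : ∃ ε : ℝ≥0, 0 < ε ∧ 1 + ε * max B 1 = θ := by
    have hpos : 0 < ((θ : ℝ) - 1) / max B 1 := div_pos (sub_pos.2 hθ) (by positivity)
    refine ⟨_, Real.toNNReal_pos.2 hpos, ?_⟩
    rw [Real.coe_toNNReal _ hpos.le]
    field_simp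
    ring
  set d := finrank ℝ E
  refine ⟨ε, hε, (hK.volume_add_smul_le hL hL0 ε.coe_nonneg).trans ?_⟩
  calc _ ≤ ∫⁻ y in K, (1 + d * ε * θ ^ (d - 1) *
          ENNReal.ofReal (supportFun L (∇ (gauge K) y))) := by
        refine lintegral_mono fun y => ?_
        have hw := hh0 y
        have hwθ : 1 + ε * supportFun L (∇ (gauge K) y) ≤ θ := by rw [← hεB]; gcongr; exact hhB y
        rw [← ENNReal.ofReal_coe_nnreal (p := ε), ← ENNReal.ofReal_coe_nnreal (p := θ),
          ← ENNReal.ofReal_natCast d, ← ENNReal.ofReal_pow θ.coe_nonneg, ← ENNReal.ofReal_one,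
          ← ENNReal.ofReal_mul (by positivity), ← ENNReal.ofReal_mul (by positivity),
          ← ENNReal.ofReal_mul (by positivity), ← ENNReal.ofReal_add zero_le_one (by positivity)]
        refine ENNReal.ofReal_le_ofReal
          ((one_add_pow_le_one_add_mul_pow (by positivity) hwθ d).trans_eq (by ring))
    _ = _ := by
        rw [lintegral_add_left measurable_const, setLIntegral_one, lintegral_const_mul' _ _ (by
          finiteness), mul_assoc _ (_ ^ _), mixedVolume]

end IsCenteredBody

variable [Nontrivial E]

theorem volume_add_mul_le_volume_add_smul (hK : IsCompact K) (hL : IsCompact L) (hK0 : K.Nonempty)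
    (hL0 : L.Nonempty) (ε : ℝ≥0) :
    volume K + finrank ℝ E * ε * (volume K ^ ((finrank ℝ E - 1 : ℝ) / finrank ℝ E) *
      volume L ^ (finrank ℝ E : ℝ)⁻¹) ≤ volume (K + (ε : ℝ) • L) := by
  have hbm := brunn_minkowski hK (hL.smul (ε : ℝ)) hK0 hL0.smul_set
  rw [volume_rpow_inv_finrank_smul ε.coe_nonneg, ENNReal.ofReal_coe_nnreal,
    ENNReal.le_rpow_inv_iff (by simp [Module.finrank_pos]), ENNReal.rpow_natCast] at hbm
  refine le_trans (le_of_eq ?_) ((pow_add_mul_le_add_pow zero_le zero_le (finrank ℝ E)).trans hbm)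
  rw [ENNReal.rpow_inv_natCast_pow Module.finrank_pos.ne', ← ENNReal.rpow_mul_natCast,
    Nat.cast_pred Module.finrank_pos, inv_mul_eq_div]
  ring

theorem IsCenteredBody.minkowski_first_inequality (hK : IsCenteredBody K)
    (hL : IsCompact L) (hL0 : 0 ∈ L) :
    volume K ^ ((finrank ℝ E - 1 : ℝ) / finrank ℝ E) * volume L ^ (finrank ℝ E : ℝ)⁻¹ ≤
      mixedVolume K L := by
  refine le_of_forall_one_lt_le_pow_mul (finrank ℝ E - 1) fun θ hθ => ?_
  obtain ⟨ε, hε, hle⟩ := hK.exists_volume_add_smul_le hL hL0 hθ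
  have hadd := (volume_add_mul_le_volume_add_smul hK.isCompact hL
    ⟨0, interior_subset hK.zero_mem_interior⟩ ⟨0, hL0⟩ ε).trans hle
  have hmul := (ENNReal.add_le_add_iff_left hK.isCompact.measure_ne_top).1 hadd
  have hd : (finrank ℝ E : ℝ≥0∞) ≠ 0 := by exact_mod_cast Module.finrank_pos.ne'
  exact (ENNReal.mul_le_mul_iff_right (mul_ne_zero hd (by simpa using hε.ne'))
    (by finiteness)).1 hmul

end MixedVolume

section Translation

variable {m : ℕ}

theorem frontier_vadd (p : Euc m) (K : Set (Euc m)) : frontier (p +ᵥ K) = p +ᵥ frontier K :=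
  ((IsometryEquiv.constVAdd p).toHomeomorph.image_frontier K).symm

theorem isOutwardNormalAt_vadd (p : Euc m) (K : Set (Euc m)) (x n : Euc m) :
    IsOutwardNormalAt (p +ᵥ K) (p +ᵥ x) n ↔ IsOutwardNormalAt K x n := by
  rw [IsOutwardNormalAt, IsOutwardNormalAt, frontier_vadd, vadd_mem_vadd_set_iff, ← image_vadd,
    forall_mem_image]
  simp only [vadd_eq_add, add_sub_add_left_eq_sub]

theorem gaussMap_vadd (p : Euc m) (K : Set (Euc m)) (x : Euc m) :
    gaussMap (p +ᵥ K) (p +ᵥ x) = gaussMap K x := by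
  have : IsOutwardNormalAt (p +ᵥ K) (p +ᵥ x) = IsOutwardNormalAt K x :=
    funext fun n => propext (isOutwardNormalAt_vadd p K x n)
  rw [gaussMap, gaussMap, this]

theorem surfMeasure_vadd (p : Euc m) (K : Set (Euc m)) : surfMeasure (p +ᵥ K) = surfMeasure K := by
  let e : Euc m ≃ᵐ Euc m := (IsometryEquiv.constVAdd p).toHomeomorph.toMeasurableEquiv
  have hmap : (μH[(m : ℝ) - 1].restrict (frontier K)).map e =
      μH[(m : ℝ) - 1].restrict (frontier (p +ᵥ K)) := by
    rw [frontier_vadd]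
    exact (((IsometryEquiv.constVAdd p).measurePreserving_hausdorffMeasure _).restrict_image_emb
      e.measurableEmbedding (frontier K)).map_eq
  have hcomp : gaussMap (p +ᵥ K) ∘ e = gaussMap K := funext (gaussMap_vadd p K)
  rw [surfMeasure, surfMeasure, ← hmap, ← hcomp]
  by_cases h : AEMeasurable (gaussMap (p +ᵥ K)) ((μH[(m : ℝ) - 1].restrict (frontier K)).map e)
  · exact AEMeasurable.map_map_of_aemeasurable h e.measurable.aemeasurable
  · rw [Measure.map_of_not_aemeasurable h, Measure.map_of_not_aemeasurable]
    rwa [← e.measurableEmbedding.aemeasurable_map_iff]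

theorem IsConvexBody.exists_isCenteredBody_vadd {K : Set (Euc m)} (hK : IsConvexBody K) :
    ∃ p : Euc m, IsCenteredBody (p +ᵥ K) := by
  obtain ⟨hconv, hcpt, q, hq⟩ := hK
  refine ⟨-q, hconv.vadd _, hcpt.vadd _, ?_⟩
  rw [interior_vadd]
  exact ⟨q, hq, neg_add_cancel q⟩

end Translation

section SurfaceMonotonicity

variable {m : ℕ} {K L M : Set (Euc m)} {t : ℝ}

theorem exists_lintegral_supportFun_surfMeasure_eq (hm : 1 ≤ m) :
    ∃ c : ℝ≥0∞, c ≠ 0 ∧ c ≠ ∞ ∧ ∀ K L : Set (Euc m), IsCenteredBody K → IsCompact L →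
      ∫⁻ v, ENNReal.ofReal (supportFun L v) ∂surfMeasure K = c * mixedVolume K L := by
  obtain ⟨c, hc0, hc, hsurf⟩ := exists_lintegral_surfMeasure_eq hm
  refine ⟨c, hc0, hc, fun K L hK hL => hsurf K hK _
    (continuous_supportFun hL).measurable.ennreal_ofReal fun s hs v => ?_⟩
  rw [supportFun_smul L hs.le, ENNReal.ofReal_mul hs.le]

theorem IsCenteredBody.mixedVolume_add_mul_le (hm : 1 ≤ m) (hK : IsCenteredBody K)
    (hL : IsCenteredBody L) (hM : IsCenteredBody M)
    (hS : surfMeasure M + ENNReal.ofReal t • surfMeasure K ≤ surfMeasure L) :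
    mixedVolume M L + ENNReal.ofReal t * mixedVolume K L ≤ volume L := by
  obtain ⟨c, hc0, hc, hsurf⟩ := exists_lintegral_supportFun_surfMeasure_eq hm
  have hle := lintegral_mono' hS (le_refl fun v => ENNReal.ofReal (supportFun L v))
  rw [lintegral_add_measure, lintegral_smul_measure, smul_eq_mul, hsurf M L hM hL.isCompact,
    hsurf K L hK hL.isCompact, hsurf L L hL hL.isCompact, mul_left_comm, ← mul_add] at hle
  exact ((ENNReal.mul_le_mul_iff_right hc0 hc).1 hle).trans hL.mixedVolume_self_le

theorem IsCenteredBody.volume_rpow_add_mul_le (hm : 1 ≤ m) (hK : IsCenteredBody K)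
    (hL : IsCenteredBody L) (hM : IsCenteredBody M)
    (hS : surfMeasure M + ENNReal.ofReal t • surfMeasure K ≤ surfMeasure L) :
    volume M ^ (((m : ℝ) - 1) / m) + ENNReal.ofReal t * volume K ^ (((m : ℝ) - 1) / m) ≤
      volume L ^ (((m : ℝ) - 1) / m) := by
  have : Nonempty (Fin m) := ⟨⟨0, hm⟩⟩
  have hm0 : (m : ℝ) ≠ 0 := by positivity
  have hvL : volume L ≠ 0 :=
    (Measure.measure_pos_of_nonempty_interior _ ⟨0, hL.zero_mem_interior⟩).ne'
  have hminkowski : ∀ {A : Set (Euc m)}, IsCenteredBody A →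
      volume A ^ (((m : ℝ) - 1) / m) * volume L ^ (m : ℝ)⁻¹ ≤ mixedVolume A L := fun hA => by
    simpa only [finrank_euclideanSpace_fin] using
      hA.minkowski_first_inequality hL.isCompact (interior_subset hL.zero_mem_interior)
  have hsplit : volume L = volume L ^ (((m : ℝ) - 1) / m) * volume L ^ (m : ℝ)⁻¹ := by
    rw [← ENNReal.rpow_add _ _ hvL hL.isCompact.measure_ne_top, sub_div, div_self hm0, one_div,
      sub_add_cancel, ENNReal.rpow_one]
  have hmul : (volume M ^ (((m : ℝ) - 1) / m) +
      ENNReal.ofReal t * volume K ^ (((m : ℝ) - 1) / m)) * volume L ^ (m : ℝ)⁻¹ ≤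
      volume L ^ (((m : ℝ) - 1) / m) * volume L ^ (m : ℝ)⁻¹ :=
    calc _ = volume M ^ (((m : ℝ) - 1) / m) * volume L ^ (m : ℝ)⁻¹ + ENNReal.ofReal t *
          (volume K ^ (((m : ℝ) - 1) / m) * volume L ^ (m : ℝ)⁻¹) := by ring
      _ ≤ mixedVolume M L + ENNReal.ofReal t * mixedVolume K L := by
          gcongr
          exacts [hminkowski hM, hminkowski hK]
      _ ≤ volume L := mixedVolume_add_mul_le hm hK hL hM hS
      _ = _ := hsplit
  exact (ENNReal.mul_le_mul_iff_left (by simp [hvL, hL.isCompact.measure_ne_top])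
    (ENNReal.rpow_ne_top_of_nonneg (by positivity) hL.isCompact.measure_ne_top)).1 hmul

end SurfaceMonotonicity

theorem volume_estimate_decomposition_general {m : ℕ} (hm : 1 ≤ m) {K L M : Set (Euc m)}
    (hK : IsConvexBody K) (hL : IsConvexBody L) (hM : IsConvexBody M) {t : ℝ} (ht : 0 ≤ t)
    (hS : surfMeasure M + ENNReal.ofReal t • surfMeasure K ≤ surfMeasure L) :
    (volume M).toReal ^ (((m : ℝ) - 1) / m) + t * (volume K).toReal ^ (((m : ℝ) - 1) / m) ≤
      (volume L).toReal ^ (((m : ℝ) - 1) / m) := by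
  obtain ⟨p, hK'⟩ := hK.exists_isCenteredBody_vadd
  obtain ⟨q, hL'⟩ := hL.exists_isCenteredBody_vadd
  obtain ⟨r, hM'⟩ := hM.exists_isCenteredBody_vadd
  have hle := hK'.volume_rpow_add_mul_le hm hL' hM' (t := t) (by simpa only [surfMeasure_vadd])
  simp only [measure_vadd] at hle
  have hexp : 0 ≤ ((m : ℝ) - 1) / m := div_nonneg (by simpa using hm) (by positivity)
  have hfin : ∀ {A : Set (Euc m)}, IsConvexBody A → volume A ^ (((m : ℝ) - 1) / m) ≠ ∞ :=
    fun hA => ENNReal.rpow_ne_top_of_nonneg hexp hA.2.1.measure_ne_top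
  have hreal := ENNReal.toReal_mono (hfin hL) hle
  rwa [ENNReal.toReal_add (hfin hM) (ENNReal.mul_ne_top ENNReal.ofReal_ne_top (hfin hK)),
    ENNReal.toReal_mul, ENNReal.toReal_ofReal ht, ← ENNReal.toReal_rpow, ← ENNReal.toReal_rpow,
    ← ENNReal.toReal_rpow] at hreal

/-- the volume estimate in the proof of the monotonicity theorem:
if `S(M,·) = S(L,·) - t·S(K,·)` then
`Vol(L)^{(m-1)/m} ≥ Vol(M)^{(m-1)/m} + t Vol(K)^{(m-1)/m} ≥ t Vol(K)^{(m-1)/m}`. -/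
theorem volume_estimate_decomposition {m : ℕ} (hm : 2 ≤ m)
    (K L M : Set (Euc m)) (hK : IsConvexBody K) (hL : IsConvexBody L)
    (hM : IsConvexBody M) (t : ℝ) (ht0 : 0 < t) (ht1 : t < 1)
    (hdom : ∀ U : Set (Euc m), MeasurableSet U → surfMeasure K U ≤ surfMeasure L U)
    (hMeq : ∀ U : Set (Euc m), MeasurableSet U →
      surfMeasure M U + ENNReal.ofReal t * surfMeasure K U = surfMeasure L U) :
    (volume L).toReal ^ (((m:ℝ) - 1) / m) ≥
      (volume M).toReal ^ (((m:ℝ) - 1) / m) + t * (volume K).toReal ^ (((m:ℝ) - 1) / m) ∧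
    (volume M).toReal ^ (((m:ℝ) - 1) / m) + t * (volume K).toReal ^ (((m:ℝ) - 1) / m) ≥
      t * (volume K).toReal ^ (((m:ℝ) - 1) / m) :=
  ⟨volume_estimate_decomposition_general (by lia) hK hL hM ht0.le
    (Measure.le_iff.2 fun U hU => (hMeq U hU).le), le_add_of_nonneg_left (by positivity)⟩
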